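/- arXiv:1707.04587 — 3 statements merged into one kernel-verified Lean document; each statement's English description precedes it below -/
import Mathlib

section
/- Let G be a group acting non-elementarily, acylindrically and by isometries on a geodesic δ-hyperbolic metric space S. Then: G is not virtually cyclic; the Gromov boundary ∂S, equipped with the topology induced by the visual metric ρ, is a completely Hausdorff topological space with at least 3 points; some element of G has north–south dynamics on ∂S; and the induced action of G on ∂S satisfies condition (C). -/
/-!
Slim triangles give Gromov's four-point inequality (`fourPt_of_slim`), and all later estimates are
manipulations of Gromov products in `S`. Boundary points enter only through sequences:
`lt_gprod_of_lt_gprodBB` and `le_gprodBB` pass between Gromov products of boundary points and of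
sequences tending to them, and `exists_gprod_subset`, `exists_open_gprod` do the same for the
visual topology.

**Loxodromic elements.** If `d(f²e,e) > d(fe,e) + 3D`, the four-point inequality makes the orbit
`n ↦ fⁿe` a quasi-geodesic (`exists_isLox`). Given two distinct limit points, take `g`, `h` moving
`e` far towards them. If none of `g`, `h`, `gh` satisfied that inequality, then `ge`, `(gh)e`,
`(gh)⁻¹e`, `h⁻¹e`, `he` would consecutively have large Gromov products, contradicting the
distinctness of the limit points (`exists_loxodromic`).

**North–south dynamics.** From `(fⁿz·fⁿe)_e = d(fⁿe,e) − (z·f⁻ⁿe)_e` one sees that `fⁿ` carries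
everything away from the repelling point uniformly close to the attracting point
(`IsLox.attract`, `IsLox.northSouthAt`).

**Not virtually cyclic.** In a virtually cyclic group, a loxodromic `f` generates a subgroup of
finite index, so every orbit stays within bounded distance of `{fᵐe}` and the limit set has at
most two points (`orbit_near_powers`, `not_virtuallyCyclic`).

**Condition (C).** A pair `a` of distinct boundary points has a centre `x ∈ S` lying almost on
every geodesic whose ends are close to `a` (`exists_pair_center`). If `g` moves a pair close to
`a` to a pair close to `(u, u)`, then `gx` is close to `u` (`near_of_pair`); likewise `gy` is close
to `v` for the centre `y` of `b`. Hence the geodesic `g[x, y]` passes close to two points `c₁`,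
`c₂` that depend only on `u` and `v` and are as far apart as acylindricity requires. Since `[x, y]`
has a finite net, acylindricity leaves finitely many such `g` (`finite_passing`,
`conditionC_bd`).
-/

/-- A geodesic segment from `u` to `v`: the image of an isometric embedding of
`[0, dist u v]` sending the endpoints to `u` and `v`. -/
def IsGeodesicSegment {S : Type*} [MetricSpace S] (Γ : Set S) (u v : S) : Prop :=
  ∃ γ : ℝ → S, γ 0 = u ∧ γ (dist u v) = v ∧
    (∀ s ∈ Set.Icc (0 : ℝ) (dist u v), ∀ t ∈ Set.Icc (0 : ℝ) (dist u v),
      dist (γ s) (γ t) = |s - t|) ∧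
    Γ = γ '' Set.Icc (0 : ℝ) (dist u v)

/-- A geodesic metric space: every pair of points is joined by a geodesic segment. -/
def GeodesicSpace (S : Type*) [MetricSpace S] : Prop :=
  ∀ u v : S, ∃ Γ : Set S, IsGeodesicSegment Γ u v

/-- `δ`-hyperbolicity: every geodesic triangle is `δ`-slim. -/
def DeltaHyperbolic (S : Type*) [MetricSpace S] (δ : ℝ) : Prop :=
  ∀ x y z : S, ∀ Γ₁ Γ₂ Γ₃ : Set S,
    IsGeodesicSegment Γ₁ x y → IsGeodesicSegment Γ₂ y z → IsGeodesicSegment Γ₃ z x →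
    ∀ p ∈ Γ₁, Metric.infDist p (Γ₂ ∪ Γ₃) ≤ δ

/-- A (left) action of a group `G` on a set `M`, given as a plain function. -/
def IsAction {G M : Type*} [Group G] (act : G → M → M) : Prop :=
  (∀ x : M, act 1 x = x) ∧ ∀ (g h : G) (x : M), act (g * h) x = act g (act h x)

/-- An action by homeomorphisms on a topological space. -/
def IsActionByHomeos {G M : Type*} [Group G] [TopologicalSpace M] (act : G → M → M) : Prop :=
  IsAction act ∧ ∀ g : G, Continuous (act g)

/-- An action by isometries on a metric space. -/
def IsIsometricAction {G S : Type*} [Group G] [MetricSpace S] (act : G → S → S) : Prop :=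
  IsAction act ∧ ∀ g : G, Isometry (act g)

theorem IsAction.injective {G M : Type*} [Group G] {act : G → M → M}
    (h : IsAction act) (g : G) : Function.Injective (act g) := by
  intro a b hab
  have h2 := congrArg (act g⁻¹) hab
  rw [← h.2 g⁻¹ g a, ← h.2 g⁻¹ g b, inv_mul_cancel, h.1, h.1] at h2
  exact h2

/-- The Gromov product of `x` and `y` with respect to the basepoint `e`. -/
noncomputable def gprod {S : Type*} [MetricSpace S] (e x y : S) : ℝ :=
  (dist x e + dist y e - dist x y) / 2

/-- A sequence converges to infinity if its pairwise Gromov products tend to infinity. -/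
def ConvToInfty {S : Type*} [MetricSpace S] (e : S) (s : ℕ → S) : Prop :=
  Filter.Tendsto (fun p : ℕ × ℕ => gprod e (s p.1) (s p.2)) Filter.atTop Filter.atTop

/-- The type of sequences in `S` converging to infinity. -/
def BSeq (S : Type*) [MetricSpace S] (e : S) := {s : ℕ → S // ConvToInfty e s}

/-- Two sequences converging to infinity are equivalent if their mutual Gromov
products tend to infinity. -/
def bequiv {S : Type*} [MetricSpace S] (e : S) (s t : BSeq S e) : Prop :=
  Filter.Tendsto (fun n => gprod e (s.1 n) (t.1 n)) Filter.atTop Filter.atTop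

/-- The Gromov boundary of `S` with respect to the basepoint `e`. -/
def GBoundary (S : Type*) [MetricSpace S] (e : S) := Quot (bequiv (S := S) e)

/-- A sequence in `S` tends to the boundary point `x`. -/
def TendstoBd {S : Type*} [MetricSpace S] (e : S) (s : ℕ → S) (x : GBoundary S e) : Prop :=
  ∃ h : ConvToInfty e s, Quot.mk _ (⟨s, h⟩ : BSeq S e) = x

/-- The Gromov product of a point `u ∈ S` with a boundary point `x`:
the infimum over sequences tending to `x` of the liminf of Gromov products. -/
noncomputable def gprodSB {S : Type*} [MetricSpace S] (e u : S) (x : GBoundary S e) : EReal :=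
  sInf {r : EReal | ∃ s : ℕ → S, TendstoBd e s x ∧
    r = Filter.liminf (fun n => (gprod e u (s n) : EReal)) Filter.atTop}

/-- The Gromov product of two boundary points. -/
noncomputable def gprodBB {S : Type*} [MetricSpace S] (e : S) (x y : GBoundary S e) : EReal :=
  sInf {r : EReal | ∃ s t : ℕ → S, TendstoBd e s x ∧ TendstoBd e t y ∧
    r = Filter.liminf (fun p : ℕ × ℕ => (gprod e (s p.1) (t p.2) : EReal)) Filter.atTop}

/-- `UK e K x = {s ∈ S | (x·s)_e > K}`. -/
def UK {S : Type*} [MetricSpace S] (e : S) (K : ℝ) (x : GBoundary S e) : Set S :=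
  {u : S | (K : EReal) < gprodSB e u x}

/-- `d'(x,y) = exp (−ζ (x·y)_e)` on the boundary (equal to `0` when the product is `∞`). -/
noncomputable def dExp {S : Type*} [MetricSpace S] (e : S) (ζ : ℝ) (x y : GBoundary S e) : ℝ :=
  if gprodBB e x y = ⊤ then 0 else Real.exp (-ζ * (gprodBB e x y).toReal)

/-- The chain metric `ρ(x,y) = inf Σ d'(s_k, s_{k+1})` over finite chains from `x` to `y`. -/
noncomputable def rhoChain {S : Type*} [MetricSpace S] (e : S) (ζ : ℝ)
    (x y : GBoundary S e) : ℝ :=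
  sInf {r : ℝ | ∃ (n : ℕ) (c : ℕ → GBoundary S e), c 0 = x ∧ c n = y ∧
    r = ∑ k ∈ Finset.range n, dExp e ζ (c k) (c (k + 1))}

/-- `ρ` is a metric. -/
def IsMetricFn {B : Type*} (ρ : B → B → ℝ) : Prop :=
  (∀ x y, 0 ≤ ρ x y) ∧ (∀ x y, ρ x y = 0 ↔ x = y) ∧ (∀ x y, ρ x y = ρ y x) ∧
  ∀ x y z, ρ x z ≤ ρ x y + ρ y z

/-- `ζ` is a suitable visual parameter: `ζ > 0`, the associated chain function `ρ` is a
metric on the boundary, and `d'/2 ≤ ρ ≤ d'`. -/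
def VisualParam {S : Type*} [MetricSpace S] (e : S) (ζ : ℝ) : Prop :=
  0 < ζ ∧ IsMetricFn (rhoChain e ζ) ∧
  ∀ x y : GBoundary S e, dExp e ζ x y / 2 ≤ rhoChain e ζ x y ∧ rhoChain e ζ x y ≤ dExp e ζ x y

/-- The topology on the Gromov boundary induced by the visual metric `ρ`. -/
noncomputable def bdTopology (S : Type*) [MetricSpace S] (e : S) (ζ : ℝ) :
    TopologicalSpace (GBoundary S e) :=
  TopologicalSpace.generateFrom
    {B | ∃ (x : GBoundary S e) (ε : ℝ), 0 < ε ∧ B = {y | rhoChain e ζ x y < ε}}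

theorem gprod_comp_ge {S : Type*} [MetricSpace S] (e : S) {f : S → S} (hf : Isometry f)
    (a b : S) : gprod e a b - dist (f e) e ≤ gprod e (f a) (f b) := by
  have h1 : dist a e - dist (f e) e ≤ dist (f a) e := by
    have h := dist_triangle (f a) e (f e)
    rw [hf.dist_eq] at h
    have hc := dist_comm e (f e)
    linarith
  have h2 : dist b e - dist (f e) e ≤ dist (f b) e := by
    have h := dist_triangle (f b) e (f e)
    rw [hf.dist_eq] at h
    have hc := dist_comm e (f e)
    linarith
  have h3 : dist (f a) (f b) = dist a b := hf.dist_eq a b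
  simp only [gprod, h3]; linarith

theorem ConvToInfty.comp {S : Type*} [MetricSpace S] {e : S} {f : S → S} (hf : Isometry f)
    {s : ℕ → S} (hs : ConvToInfty e s) : ConvToInfty e (fun n => f (s n)) := by
  have h : Filter.Tendsto (fun p : ℕ × ℕ => gprod e (s p.1) (s p.2) + -dist (f e) e)
      Filter.atTop Filter.atTop := Filter.tendsto_atTop_add_const_right _ _ hs
  refine Filter.tendsto_atTop_mono (fun p => ?_) h
  have := gprod_comp_ge e hf (s p.1) (s p.2)
  simpa [sub_eq_add_neg] using this

/-- The map induced on the Gromov boundary by an isometry of `S`. -/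
def bdMap {S : Type*} [MetricSpace S] (e : S) (f : S → S) (hf : Isometry f) :
    GBoundary S e → GBoundary S e :=
  Quot.map (fun s : BSeq S e => (⟨fun n => f (s.1 n), s.2.comp hf⟩ : BSeq S e))
    (by
      intro s t h
      have h' : Filter.Tendsto (fun n => gprod e (s.1 n) (t.1 n) + -dist (f e) e)
          Filter.atTop Filter.atTop := Filter.tendsto_atTop_add_const_right _ _ h
      refine Filter.tendsto_atTop_mono (fun n => ?_) h'
      have := gprod_comp_ge e hf (s.1 n) (t.1 n)
      simpa [sub_eq_add_neg] using this)

/-- The induced map on pairs. -/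
def pairMap {M : Type*} (f : M → M) (p : M × M) : M × M := (f p.1, f p.2)

/-- Condition (C) for an action on a topological space. -/
def ConditionC {G M : Type*} [TopologicalSpace M] (act : G → M → M) : Prop :=
  ∀ u v : M × M, u.1 = u.2 → v.1 = v.2 → u ≠ v →
    ∃ U V : Set (M × M), IsOpen U ∧ IsOpen V ∧ u ∈ U ∧ v ∈ V ∧
      ∀ a b : M × M, a.1 ≠ a.2 → b.1 ≠ b.2 → a ≠ b →
        ∃ A B : Set (M × M), IsOpen A ∧ IsOpen B ∧ a ∈ A ∧ b ∈ B ∧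
          {g : G | (pairMap (act g) '' A ∩ U).Nonempty ∧
            (pairMap (act g) '' B ∩ V).Nonempty}.Finite

/-- Condition (C₁) for a pair of open sets `U, V`. -/
def CondC1 {G M : Type*} [TopologicalSpace M] (act : G → M → M) (U V : Set M) : Prop :=
  ∀ p q : M, p ≠ q →
    ∃ A B : Set M, IsOpen A ∧ IsOpen B ∧ p ∈ A ∧ q ∈ B ∧
      {g : G | (act g '' A ∩ U).Nonempty ∧ (act g '' A ∩ V).Nonempty ∧
        (act g '' B ∩ U).Nonempty ∧ (act g '' B ∩ V).Nonempty}.Finite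

/-- Condition (C₂) for a pair of open sets `U, V`. -/
def CondC2 {G M : Type*} [TopologicalSpace M] (act : G → M → M) (U V : Set M) : Prop :=
  ∀ p q r : M, p ≠ q → q ≠ r → p ≠ r →
    ∃ A B C : Set M, IsOpen A ∧ IsOpen B ∧ IsOpen C ∧ p ∈ A ∧ q ∈ B ∧ r ∈ C ∧
      {g : G | (act g '' A ∩ U).Nonempty ∧ (act g '' B ∩ V).Nonempty ∧
        (act g '' C ∩ U).Nonempty ∧ (act g '' C ∩ V).Nonempty}.Finite

/-- Condition (C₃) for a pair of open sets `U, V`. -/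
def CondC3 {G M : Type*} [TopologicalSpace M] (act : G → M → M) (U V : Set M) : Prop :=
  ∀ p q r s : M, p ≠ q → p ≠ r → p ≠ s → q ≠ r → q ≠ s → r ≠ s →
    ∃ A B C D : Set M, IsOpen A ∧ IsOpen B ∧ IsOpen C ∧ IsOpen D ∧
      p ∈ A ∧ q ∈ B ∧ r ∈ C ∧ s ∈ D ∧
      {g : G | (act g '' A ∩ U).Nonempty ∧ (act g '' B ∩ U).Nonempty ∧
        (act g '' C ∩ V).Nonempty ∧ (act g '' D ∩ V).Nonempty}.Finite

/-- Two points `x, y` satisfy (C₁): some open sets `U ∋ x`, `V ∋ y` satisfy (C₁). -/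
def PairC1 {G M : Type*} [TopologicalSpace M] (act : G → M → M) (x y : M) : Prop :=
  ∃ U V : Set M, IsOpen U ∧ IsOpen V ∧ x ∈ U ∧ y ∈ V ∧ CondC1 (G := G) act U V

/-- Two points `x, y` satisfy (C₂). -/
def PairC2 {G M : Type*} [TopologicalSpace M] (act : G → M → M) (x y : M) : Prop :=
  ∃ U V : Set M, IsOpen U ∧ IsOpen V ∧ x ∈ U ∧ y ∈ V ∧ CondC2 (G := G) act U V

/-- Two points `x, y` satisfy (C₃). -/
def PairC3 {G M : Type*} [TopologicalSpace M] (act : G → M → M) (x y : M) : Prop :=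
  ∃ U V : Set M, IsOpen U ∧ IsOpen V ∧ x ∈ U ∧ y ∈ V ∧ CondC3 (G := G) act U V

/-- `g` has north–south dynamics on `M` with fixed points `x ≠ y`. -/
def NorthSouthAt {G M : Type*} [Group G] [TopologicalSpace M] (act : G → M → M)
    (g : G) (x y : M) : Prop :=
  x ≠ y ∧ (∀ z : M, act g z = z ↔ z = x ∨ z = y) ∧
  ∀ U V : Set M, IsOpen U → IsOpen V → x ∈ U → y ∈ V →
    ∃ N : ℕ, ∀ n : ℕ, N < n → act (g ^ n) '' Uᶜ ⊆ V

/-- `g` has north–south dynamics on `M`. -/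
def NorthSouth {G M : Type*} [Group G] [TopologicalSpace M] (act : G → M → M) (g : G) : Prop :=
  ∃ x y : M, NorthSouthAt act g x y

/-- A completely Hausdorff space: distinct points are separated by open sets with
disjoint closures. -/
def CompletelyHausdorff (M : Type*) [TopologicalSpace M] : Prop :=
  ∀ u v : M, u ≠ v → ∃ U V : Set M, IsOpen U ∧ IsOpen V ∧ u ∈ U ∧ v ∈ V ∧
    closure U ∩ closure V = ∅

/-- An acylindrical action on a metric space. -/
def AcylindricalAction {G S : Type*} [Group G] [MetricSpace S] (act : G → S → S) : Prop :=
  ∀ ε : ℝ, 0 < ε → ∃ (R : ℝ) (N : ℕ), 0 < R ∧ 0 < N ∧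
    ∀ x y : S, R ≤ dist x y →
      {g : G | dist x (act g x) ≤ ε ∧ dist y (act g y) ≤ ε}.Finite ∧
      {g : G | dist x (act g x) ≤ ε ∧ dist y (act g y) ≤ ε}.ncard ≤ N

/-- The limit set of the action of `G` on the boundary of `S`. -/
def limitSet {G S : Type*} [Group G] [MetricSpace S] (act : G → S → S) (e : S) :
    Set (GBoundary S e) :=
  {x | ∃ (s : S) (gs : ℕ → G), TendstoBd e (fun n => act (gs n) s) x}

/-- The action is non-elementary: the limit set has at least 3 points. -/
def NonelemAction {G S : Type*} [Group G] [MetricSpace S] (act : G → S → S) (e : S) : Prop :=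
  ∃ x y z : GBoundary S e, x ∈ limitSet act e ∧ y ∈ limitSet act e ∧ z ∈ limitSet act e ∧
    x ≠ y ∧ y ≠ z ∧ x ≠ z

/-- A group is acylindrically hyperbolic if it admits a non-elementary acylindrical
isometric action on a geodesic Gromov hyperbolic space. -/
def AcylindricallyHyperbolic (G : Type*) [Group G] : Prop :=
  ∃ (S : Type) (_i : MetricSpace S) (act : G → S → S) (δ : ℝ),
    0 ≤ δ ∧ GeodesicSpace S ∧ DeltaHyperbolic S δ ∧ IsIsometricAction act ∧
    AcylindricalAction act ∧ ∃ e : S, NonelemAction act e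

/-- A group is virtually cyclic if it has a cyclic subgroup of finite index. -/
def VirtuallyCyclic (G : Type*) [Group G] : Prop :=
  ∃ H : Subgroup G, IsCyclic H ∧ H.index ≠ 0

/-! ### Slim triangles and the four-point inequality -/

section FourPoint

variable {S : Type*} [MetricSpace S]

/-- Gromov's four-point inequality with constant `D`. -/
def FourPt (S : Type*) [MetricSpace S] (D : ℝ) : Prop :=
  ∀ w x y z : S, min (gprod w x y) (gprod w y z) - D ≤ gprod w x z

theorem gprod_comm (e x y : S) : gprod e x y = gprod e y x := by
  simp only [gprod, dist_comm x y]; ring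

theorem gprod_nonneg (e x y : S) : 0 ≤ gprod e x y := by
  have := dist_triangle_right x y e
  simp only [gprod]; linarith

theorem gprod_self (e x : S) : gprod e x x = dist x e := by
  simp only [gprod, dist_self]; ring

theorem gprod_le_left (e x y : S) : gprod e x y ≤ dist x e := by
  have := dist_triangle_left y e x
  simp only [gprod]; linarith

theorem gprod_le_right (e x y : S) : gprod e x y ≤ dist y e := by
  rw [gprod_comm]; exact gprod_le_left e y x

/-- The Gromov product is `1`-Lipschitz in its second argument. -/
theorem gprod_sub_le (e x y y' : S) : gprod e x y - dist y y' ≤ gprod e x y' := by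
  have h1 := dist_triangle y y' e
  have h2 := dist_triangle_right x y' y
  rw [dist_comm y' y] at h2
  simp only [gprod]
  have h3 := dist_triangle x y y'
  linarith

/-- Moving the basepoint changes the Gromov product by at most the displacement. -/
theorem gprod_base (e w x y : S) : gprod e x y - dist w e ≤ gprod w x y := by
  have h1 := dist_triangle x w e
  have h2 := dist_triangle y w e
  simp only [gprod]; linarith

theorem IsGeodesicSegment.symm {Γ : Set S} {u v : S} (h : IsGeodesicSegment Γ u v) :
    IsGeodesicSegment Γ v u := by
  obtain ⟨γ, h0, h1, h2, rfl⟩ := h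
  refine ⟨fun t => γ (dist u v - t), ?_, ?_, ?_, ?_⟩
  · simpa using h1
  · simpa [dist_comm v u] using h0
  · intro s hs t ht
    rw [dist_comm v u] at hs ht
    rw [h2 _ ⟨by linarith [hs.2], by linarith [hs.1]⟩ _ ⟨by linarith [ht.2], by linarith [ht.1]⟩,
      abs_sub_comm]
    congr 1; ring
  · ext p
    simp only [Set.mem_image, dist_comm v u]
    constructor
    · rintro ⟨t, ht, rfl⟩
      exact ⟨dist u v - t, ⟨by linarith [ht.2], by linarith [ht.1]⟩, by simp⟩
    · rintro ⟨t, ht, rfl⟩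
      exact ⟨dist u v - t, ⟨by linarith [ht.2], by linarith [ht.1]⟩, rfl⟩

theorem IsGeodesicSegment.left_mem {Γ : Set S} {u v : S} (h : IsGeodesicSegment Γ u v) :
    u ∈ Γ := by
  obtain ⟨γ, h0, h1, h2, rfl⟩ := h
  exact ⟨0, ⟨le_rfl, dist_nonneg⟩, h0⟩

theorem IsGeodesicSegment.right_mem {Γ : Set S} {u v : S} (h : IsGeodesicSegment Γ u v) :
    v ∈ Γ := h.symm.left_mem

/-- Distances from the endpoints add up along a geodesic segment. -/
theorem IsGeodesicSegment.dist_add {Γ : Set S} {u v : S} (h : IsGeodesicSegment Γ u v)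
    {p : S} (hp : p ∈ Γ) : dist u p + dist p v = dist u v := by
  obtain ⟨γ, h0, h1, h2, rfl⟩ := h
  obtain ⟨t, ht, rfl⟩ := hp
  have e1 := h2 0 ⟨le_rfl, dist_nonneg⟩ t ht
  have e2 := h2 t ht (dist u v) ⟨dist_nonneg, le_rfl⟩
  rw [h0, zero_sub, abs_neg, abs_of_nonneg ht.1] at e1
  rw [h1, abs_sub_comm, abs_of_nonneg (by linarith [ht.2])] at e2
  linarith

theorem min_infDist_le {A B : Set S} (hA : A.Nonempty) {p : S} {δ : ℝ}
    (h : Metric.infDist p (A ∪ B) ≤ δ) :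
    Metric.infDist p A ≤ δ ∨ Metric.infDist p B ≤ δ := by
  by_contra! hc
  have hlt : Metric.infDist p (A ∪ B) < min (Metric.infDist p A) (Metric.infDist p B) :=
    lt_of_le_of_lt h (lt_min hc.1 hc.2)
  obtain ⟨y, hy, hyd⟩ := (Metric.infDist_lt_iff (hA.mono Set.subset_union_left)).1 hlt
  rcases hy with hy | hy
  · exact absurd (Metric.infDist_le_dist_of_mem hy) (not_le.2 (hyd.trans_le (min_le_left _ _)))
  · exact absurd (Metric.infDist_le_dist_of_mem hy) (not_le.2 (hyd.trans_le (min_le_right _ _)))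

/-- On the side `[x, y]` of a slim triangle with third vertex `c` some point is close to both
other sides, by the intermediate value theorem. That point is within `(x·y)_c + 2δ + 2` of `c`. -/
theorem exists_close_point {δ : ℝ} (hgeo : GeodesicSpace S) (hhyp : DeltaHyperbolic S δ)
    {x y : S} {γ : ℝ → S} (h0 : γ 0 = x) (h1 : γ (dist x y) = y)
    (hγ : ∀ s ∈ Set.Icc (0 : ℝ) (dist x y), ∀ t ∈ Set.Icc (0 : ℝ) (dist x y),
      dist (γ s) (γ t) = |s - t|) (c : S) :
    ∃ t ∈ Set.Icc (0 : ℝ) (dist x y), dist (γ t) c ≤ gprod c x y + 2 * δ + 2 := by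
  obtain ⟨Γ₂, hΓ₂⟩ := hgeo y c
  obtain ⟨Γ₃, hΓ₃⟩ := hgeo c x
  have hΓ₁ : IsGeodesicSegment (γ '' Set.Icc (0 : ℝ) (dist x y)) x y := ⟨γ, h0, h1, hγ, rfl⟩
  have hslim := hhyp x y c _ _ _ hΓ₁ hΓ₂ hΓ₃
  have hcont : ContinuousOn γ (Set.Icc 0 (dist x y)) := by
    have : LipschitzOnWith 1 γ (Set.Icc 0 (dist x y)) :=
      LipschitzOnWith.of_dist_le_mul fun s hs t ht => by
        rw [hγ s hs t ht, Real.dist_eq]; simp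
    exact this.continuousOn
  have hf : ContinuousOn (fun t => Metric.infDist (γ t) Γ₂ - Metric.infDist (γ t) Γ₃)
      (Set.Icc 0 (dist x y)) :=
    ((Metric.continuous_infDist_pt _).comp_continuousOn hcont).sub
      ((Metric.continuous_infDist_pt _).comp_continuousOn hcont)
  have hivt := intermediate_value_Icc' (dist_nonneg (x := x) (y := y)) hf
  have hz : (0 : ℝ) ∈ Set.Icc
      (Metric.infDist (γ (dist x y)) Γ₂ - Metric.infDist (γ (dist x y)) Γ₃)
      (Metric.infDist (γ 0) Γ₂ - Metric.infDist (γ 0) Γ₃) := by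
    rw [h0, h1, Metric.infDist_zero_of_mem hΓ₂.left_mem, Metric.infDist_zero_of_mem hΓ₃.right_mem]
    constructor
    · linarith [Metric.infDist_nonneg (x := y) (s := Γ₃)]
    · linarith [Metric.infDist_nonneg (x := x) (s := Γ₂)]
  obtain ⟨t, ht, hteq⟩ := hivt hz
  have hteq : Metric.infDist (γ t) Γ₂ = Metric.infDist (γ t) Γ₃ := by
    simp only at hteq; linarith
  have hor := min_infDist_le ⟨_, hΓ₂.left_mem⟩ (hslim (γ t) ⟨t, ht, rfl⟩)
  have hA : Metric.infDist (γ t) Γ₂ ≤ δ := by rcases hor with h | h <;> linarith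
  have hB : Metric.infDist (γ t) Γ₃ ≤ δ := by rcases hor with h | h <;> linarith
  obtain ⟨q₂, hq₂, hd₂⟩ := (Metric.infDist_lt_iff ⟨_, hΓ₂.left_mem⟩).1
    (lt_of_le_of_lt hA (lt_add_one δ))
  obtain ⟨q₃, hq₃, hd₃⟩ := (Metric.infDist_lt_iff ⟨_, hΓ₃.left_mem⟩).1
    (lt_of_le_of_lt hB (lt_add_one δ))
  refine ⟨t, ht, ?_⟩
  have e1 := hΓ₁.dist_add ⟨t, ht, rfl⟩
  have e2 := hΓ₂.dist_add hq₂
  have e3 := hΓ₃.dist_add hq₃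
  have t1 := dist_triangle y q₂ (γ t)
  have t2 := dist_triangle (γ t) q₂ c
  have t3 := dist_triangle (γ t) q₃ x
  have t4 := dist_triangle (γ t) q₃ c
  rw [dist_comm q₂ (γ t)] at t1
  rw [dist_comm x (γ t)] at e1
  rw [dist_comm y (γ t)] at t1
  rw [dist_comm c q₃, dist_comm c x] at e3
  simp only [gprod]
  linarith

theorem fourPt_of_slim {δ : ℝ} (hgeo : GeodesicSpace S) (hhyp : DeltaHyperbolic S δ) :
    FourPt S (3 * δ + 3) := by
  intro w x y z
  obtain ⟨Γ₁, hΓ₁⟩ := hgeo x z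
  obtain ⟨Γ₂, hΓ₂⟩ := hgeo z y
  obtain ⟨Γ₃, hΓ₃⟩ := hgeo y x
  have hslim := hhyp x z y _ _ _ hΓ₁ hΓ₂ hΓ₃
  obtain ⟨γ, h0, h1, hγ, rfl⟩ := id hΓ₁
  obtain ⟨t, ht, hd⟩ := exists_close_point hgeo hhyp h0 h1 hγ w
  obtain ⟨q, hq, hqd⟩ := (Metric.infDist_lt_iff
    (Set.Nonempty.inl ⟨_, hΓ₂.left_mem⟩)).1
    (lt_of_le_of_lt (hslim _ ⟨t, ht, rfl⟩) (lt_add_one δ))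
  -- A point of a geodesic `[a, b]` is at distance at least `(a·b)_w` from `w`.
  have key : min (gprod w x y) (gprod w y z) ≤ dist q w := by
    rcases hq with hq | hq
    · have e2 := hΓ₂.dist_add hq
      have t1 := dist_triangle z q w
      have t2 := dist_triangle y q w
      rw [dist_comm y q] at t2
      refine (min_le_right _ _).trans ?_
      simp only [gprod]
      rw [dist_comm y z]; linarith
    · have e2 := hΓ₃.dist_add hq
      have t1 := dist_triangle x q w
      have t2 := dist_triangle y q w
      rw [dist_comm x q] at t1
      refine (min_le_left _ _).trans ?_
      simp only [gprod]
      rw [dist_comm x y]; linarith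
  have t3 := dist_triangle_left q w (γ t)
  linarith

theorem FourPt.nonneg {D : ℝ} (hD : FourPt S D) (w : S) : 0 ≤ D := by
  have := hD w w w w
  simp only [min_self] at this; linarith

theorem FourPt.two {D : ℝ} (hD : FourPt S D) (w : S) {a b c : S} {k : ℝ}
    (h1 : k ≤ gprod w a b) (h2 : k ≤ gprod w b c) : k - D ≤ gprod w a c :=
  (sub_le_sub_right (le_min h1 h2) D).trans (hD w a b c)

theorem FourPt.three {D : ℝ} (hD : FourPt S D) (w : S) {a b c d : S} {k : ℝ}
    (h1 : k ≤ gprod w a b) (h2 : k ≤ gprod w b c) (h3 : k ≤ gprod w c d) :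
    k - 2 * D ≤ gprod w a d := by
  have h0 := hD.nonneg w
  have h4 := hD.two w (hD.two w h1 h2) (by linarith : k - D ≤ gprod w c d)
  linarith

/-- The four-point inequality for the three pairings of a quadruple. -/
theorem fourPt_dist {D : ℝ} (hD : FourPt S D) (x y z w : S) :
    dist x z + dist y w ≤ dist x y + dist z w + 2 * D ∨
    dist x z + dist y w ≤ dist y z + dist x w + 2 * D := by
  have h := hD w x y z
  simp only [gprod] at h
  rcases min_choice ((dist x w + dist y w - dist x y) / 2) ((dist y w + dist z w - dist y z) / 2)
    with h' | h' <;> rw [h'] at h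
  · left; linarith
  · right; linarith

end FourPoint

/-! ### Boundary points, sequences and the visual topology -/

section Boundary

variable {S : Type*} [MetricSpace S]

theorem eventually_prod_nat {P : ℕ × ℕ → Prop} :
    (∀ᶠ p in Filter.atTop, P p) ↔ ∃ N, ∀ i, N ≤ i → ∀ j, N ≤ j → P (i, j) := by
  rw [Filter.eventually_atTop]
  constructor
  · rintro ⟨⟨a, b⟩, h⟩
    exact ⟨max a b, fun i hi j hj =>
      h (i, j) ⟨(le_max_left a b).trans hi, (le_max_right a b).trans hj⟩⟩
  · rintro ⟨N, h⟩
    exact ⟨(N, N), fun p hp => h p.1 hp.1 p.2 hp.2⟩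

/-- The mutual Gromov products of two sequences tend to infinity, uniformly in both indices. -/
def JointInf (e : S) (s t : ℕ → S) : Prop :=
  ∀ c : ℝ, ∃ N, ∀ i, N ≤ i → ∀ j, N ≤ j → c ≤ gprod e (s i) (t j)

theorem convToInfty_iff {e : S} {s : ℕ → S} : ConvToInfty e s ↔ JointInf e s s := by
  simp only [ConvToInfty, JointInf, Filter.tendsto_atTop, eventually_prod_nat]

theorem JointInf.symm {e : S} {s t : ℕ → S} (h : JointInf e s t) : JointInf e t s := by
  intro c
  obtain ⟨N, hN⟩ := h c
  exact ⟨N, fun i hi j hj => by rw [gprod_comm]; exact hN j hj i hi⟩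

theorem JointInf.trans {D : ℝ} (hD : FourPt S D) {e : S} {s t r : ℕ → S} (h : JointInf e s t)
    (h' : JointInf e t r) : JointInf e s r := by
  intro c
  obtain ⟨N, hN⟩ := h (c + D)
  obtain ⟨M, hM⟩ := h' (c + D)
  refine ⟨max N M, fun i hi j hj => ?_⟩
  have := hD.two e (hN i ((le_max_left _ _).trans hi) _ (le_max_left _ _))
    (hM _ (le_max_right N M) j ((le_max_right _ _).trans hj))
  linarith

theorem jointInf_of_bequiv {D : ℝ} (hD : FourPt S D) {e : S} {s t : BSeq S e}
    (h : bequiv e s t) : JointInf e s.1 t.1 := by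
  intro c
  obtain ⟨N', hN'⟩ := convToInfty_iff.1 t.2 (c + 2 * D)
  obtain ⟨M, hM⟩ := Filter.eventually_atTop.1 (Filter.tendsto_atTop.1 h (c + 2 * D))
  obtain ⟨N₂, hN₂⟩ := convToInfty_iff.1 s.2 (c + 2 * D)
  refine ⟨max N₂ (max N' M), fun i hi j hj => ?_⟩
  have hk2 : N₂ ≤ max N₂ (max N' M) := le_max_left _ _
  have hk1 : N' ≤ max N₂ (max N' M) := (le_max_left _ _).trans (le_max_right _ _)
  have hk0 : M ≤ max N₂ (max N' M) := (le_max_right _ _).trans (le_max_right _ _)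
  have := hD.three e (hN₂ i (hk2.trans hi) _ hk2) (hM _ hk0) (hN' _ hk1 j (hk1.trans hj))
  linarith

/-- Any two sequences tending to the same boundary point have joint Gromov products tending to
infinity; in particular `bequiv` is already an equivalence relation. -/
theorem jointInf_of_tendsto {D : ℝ} (hD : FourPt S D) {e : S} {s t : ℕ → S}
    {x : GBoundary S e} (hs : TendstoBd e s x) (ht : TendstoBd e t x) : JointInf e s t := by
  obtain ⟨h1, rfl⟩ := hs
  obtain ⟨h2, h3⟩ := ht
  have key : ∀ a b : BSeq S e, Relation.EqvGen (bequiv e) a b → JointInf e a.1 b.1 := by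
    intro a b hab
    induction hab with
    | rel _ _ h => exact jointInf_of_bequiv hD h
    | refl a => exact convToInfty_iff.1 a.2
    | symm _ _ _ ih => exact ih.symm
    | trans _ _ _ _ _ ih1 ih2 => exact ih1.trans hD ih2
  exact key _ _ (Quot.eqvGen_exact h3.symm)

theorem tendstoBd_of_jointInf {e : S} {s t : ℕ → S} {x : GBoundary S e}
    (hs : TendstoBd e s x) (ht : JointInf e t t) (hst : JointInf e s t) : TendstoBd e t x := by
  obtain ⟨h1, rfl⟩ := hs
  refine ⟨convToInfty_iff.2 ht, (Quot.sound ?_).symm⟩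
  refine Filter.tendsto_atTop.2 fun c => ?_
  obtain ⟨N, hN⟩ := hst c
  exact Filter.eventually_atTop.2 ⟨N, fun n hn => hN n hn n hn⟩

theorem exists_tendstoBd {e : S} (x : GBoundary S e) : ∃ s, TendstoBd e s x := by
  obtain ⟨s, rfl⟩ := Quot.exists_rep x
  exact ⟨s.1, s.2, rfl⟩

theorem TendstoBd.bdMap {e : S} {s : ℕ → S} {x : GBoundary S e} (hs : TendstoBd e s x)
    {f : S → S} (hf : Isometry f) : TendstoBd e (fun n => f (s n)) (bdMap e f hf x) := by
  obtain ⟨h, rfl⟩ := hs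
  exact ⟨h.comp hf, rfl⟩

/-- A bounded perturbation of a sequence tends to the same boundary point. -/
theorem TendstoBd.perturb {e : S} {s t : ℕ → S} {x : GBoundary S e} (hs : TendstoBd e s x)
    {B : ℝ} (hB : ∀ n, dist (s n) (t n) ≤ B) : TendstoBd e t x := by
  have h0 := convToInfty_iff.1 hs.1
  have h1 : JointInf e s t := by
    intro c
    obtain ⟨N, hN⟩ := h0 (c + B)
    refine ⟨N, fun i hi j hj => ?_⟩
    have := gprod_sub_le e (s i) (s j) (t j)
    linarith [hN i hi j hj, hB j]
  refine tendstoBd_of_jointInf hs ?_ h1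
  intro c
  obtain ⟨N, hN⟩ := h1 (c + B)
  refine ⟨N, fun i hi j hj => ?_⟩
  have := gprod_sub_le e (t j) (s i) (t i)
  rw [gprod_comm e (t j), gprod_comm e (t j)] at this
  linarith [hN i hi j hj, hB i]

theorem lt_gprod_of_lt_gprodBB {e : S} {x y : GBoundary S e} {K : ℝ}
    (h : (K : EReal) < gprodBB e x y) {s t : ℕ → S} (hs : TendstoBd e s x)
    (ht : TendstoBd e t y) : ∃ N, ∀ i, N ≤ i → ∀ j, N ≤ j → K < gprod e (s i) (t j) := by
  have h1 : (K : EReal) <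
      Filter.liminf (fun p : ℕ × ℕ => (gprod e (s p.1) (t p.2) : EReal)) Filter.atTop :=
    lt_of_lt_of_le h (sInf_le ⟨s, t, hs, ht, rfl⟩)
  obtain ⟨N, hN⟩ := eventually_prod_nat.1 (Filter.eventually_lt_of_lt_liminf h1)
  exact ⟨N, fun i hi j hj => EReal.coe_lt_coe_iff.1 (hN i hi j hj)⟩

/-- Frequent largeness of `(s_i·t_j)_e` for one choice of sequences bounds the Gromov product of
the limits from below, up to `2D`. -/
theorem le_gprodBB {D : ℝ} (hD : FourPt S D) {e : S} {x y : GBoundary S e} {c : ℝ}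
    {s t : ℕ → S} (hs : TendstoBd e s x) (ht : TendstoBd e t y)
    (h : ∀ N, ∃ i, N ≤ i ∧ ∃ j, N ≤ j ∧ c ≤ gprod e (s i) (t j)) :
    ((c - 2 * D : ℝ) : EReal) ≤ gprodBB e x y := by
  refine le_sInf ?_
  rintro r ⟨s', t', hs', ht', rfl⟩
  refine Filter.le_liminf_of_le (by isBoundedDefault) (eventually_prod_nat.2 ?_)
  obtain ⟨N, hN⟩ := jointInf_of_tendsto hD hs' hs c
  obtain ⟨M, hM⟩ := jointInf_of_tendsto hD ht ht' c
  obtain ⟨k, hk, l, hl, hkl⟩ := h (max N M)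
  refine ⟨max N M, fun i hi j hj => EReal.coe_le_coe_iff.2 ?_⟩
  exact hD.three e (hN i ((le_max_left _ _).trans hi) k ((le_max_left _ _).trans hk)) hkl
    (hM l ((le_max_right _ _).trans hl) j ((le_max_right _ _).trans hj))

theorem gprodBB_nonneg {e : S} (x y : GBoundary S e) : (0 : EReal) ≤ gprodBB e x y := by
  refine le_sInf ?_
  rintro r ⟨s', t', hs', ht', rfl⟩
  refine Filter.le_liminf_of_le (by isBoundedDefault) (Filter.Eventually.of_forall fun p => ?_)
  exact_mod_cast gprod_nonneg e _ _

variable {e : S} {ζ : ℝ}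

theorem rho_self (hζ : VisualParam e ζ) (x : GBoundary S e) : rhoChain e ζ x x = 0 :=
  (hζ.2.1.2.1 x x).2 rfl

theorem eq_of_gprodBB_eq_top (hζ : VisualParam e ζ) {x y : GBoundary S e}
    (h : gprodBB e x y = ⊤) : x = y := by
  have h1 := (hζ.2.2 x y).2
  rw [dExp, if_pos h] at h1
  exact (hζ.2.1.2.1 x y).1 (le_antisymm h1 (hζ.2.1.1 x y))

theorem eq_of_frequently {D : ℝ} (hD : FourPt S D) (hζ : VisualParam e ζ)
    {x y : GBoundary S e} {s t : ℕ → S} (hs : TendstoBd e s x) (ht : TendstoBd e t y)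
    (h : ∀ c : ℝ, ∀ N, ∃ i, N ≤ i ∧ ∃ j, N ≤ j ∧ c ≤ gprod e (s i) (t j)) : x = y := by
  refine eq_of_gprodBB_eq_top hζ (EReal.eq_top_iff_forall_lt _ |>.2 fun c => ?_)
  refine lt_of_lt_of_le ?_ (le_gprodBB hD hs ht (h (c + 1 + 2 * D)))
  exact_mod_cast (by linarith : c < c + 1 + 2 * D - 2 * D)

/-- For distinct limits the Gromov products of the sequences are eventually bounded. -/
theorem gprod_bounded_of_ne {D : ℝ} (hD : FourPt S D) (hζ : VisualParam e ζ)
    {x y : GBoundary S e} (hxy : x ≠ y) {s t : ℕ → S} (hs : TendstoBd e s x)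
    (ht : TendstoBd e t y) :
    ∃ L : ℝ, 0 ≤ L ∧ ∃ N, ∀ i, N ≤ i → ∀ j, N ≤ j → gprod e (s i) (t j) ≤ L := by
  by_contra! hc
  refine hxy (eq_of_frequently hD hζ hs ht fun c N => ?_)
  obtain ⟨i, hi, j, hj, h⟩ := hc (max c 0) (le_max_right _ _) N
  exact ⟨i, hi, j, hj, (le_max_left _ _).trans h.le⟩

theorem isOpen_ball (x : GBoundary S e) {ε : ℝ} (hε : 0 < ε) :
    @IsOpen _ (bdTopology S e ζ) {y | rhoChain e ζ x y < ε} :=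
  TopologicalSpace.isOpen_generateFrom_of_mem ⟨x, ε, hε, rfl⟩

theorem exists_ball_subset (hζ : VisualParam e ζ) {U : Set (GBoundary S e)}
    (hU : @IsOpen _ (bdTopology S e ζ) U) {x : GBoundary S e} (hx : x ∈ U) :
    ∃ ε > 0, ∀ y, rhoChain e ζ x y < ε → y ∈ U := by
  induction hU with
  | basic U h =>
    obtain ⟨z, ε, hε, rfl⟩ := h
    refine ⟨ε - rhoChain e ζ z x, sub_pos.2 hx, fun y hy => ?_⟩
    have := hζ.2.1.2.2.2 z x y
    simp only [Set.mem_ofPred_eq]; linarith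
  | univ => exact ⟨1, one_pos, fun _ _ => trivial⟩
  | inter A B _ _ iA iB =>
    obtain ⟨ε, hε, h1⟩ := iA hx.1
    obtain ⟨ε', hε', h2⟩ := iB hx.2
    exact ⟨min ε ε', lt_min hε hε', fun y hy =>
      ⟨h1 y (hy.trans_le (min_le_left _ _)), h2 y (hy.trans_le (min_le_right _ _))⟩⟩
  | sUnion F _ ih =>
    obtain ⟨A, hA, hxA⟩ := hx
    obtain ⟨ε, hε, h1⟩ := ih A hA hxA
    exact ⟨ε, hε, fun y hy => ⟨A, hA, h1 y hy⟩⟩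

/-- Open sets contain all points whose Gromov product with the centre is large. -/
theorem exists_gprod_subset (hζ : VisualParam e ζ) {U : Set (GBoundary S e)}
    (hU : @IsOpen _ (bdTopology S e ζ) U) {x : GBoundary S e} (hx : x ∈ U) :
    ∃ K : ℝ, ∀ y, (K : EReal) < gprodBB e x y → y ∈ U := by
  obtain ⟨ε, hε, h⟩ := exists_ball_subset hζ hU hx
  refine ⟨-Real.log ε / ζ, fun y hy => h y (lt_of_le_of_lt (hζ.2.2 x y).2 ?_)⟩
  rw [dExp]
  split_ifs with htop
  · exact hε
  · have hbot : gprodBB e x y ≠ ⊥ := fun hb => by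
      have := gprodBB_nonneg x y
      rw [hb] at this
      exact absurd this (not_le.2 EReal.bot_lt_zero)
    rw [← EReal.coe_toReal htop hbot, EReal.coe_lt_coe_iff, div_lt_iff₀ hζ.1] at hy
    rw [← Real.lt_log_iff_exp_lt hε]
    linarith

/-- Every superlevel set `{y | (x·y) > K}` contains an open neighbourhood of `x`. -/
theorem exists_open_gprod (hζ : VisualParam e ζ) (x : GBoundary S e) (K : ℝ) :
    ∃ U : Set (GBoundary S e), @IsOpen _ (bdTopology S e ζ) U ∧ x ∈ U ∧
      ∀ y ∈ U, (K : EReal) < gprodBB e x y := by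
  have hpos : 0 < Real.exp (-ζ * K) / 2 := by positivity
  refine ⟨{y | rhoChain e ζ x y < Real.exp (-ζ * K) / 2}, isOpen_ball x hpos, ?_, ?_⟩
  · simpa only [Set.mem_ofPred_eq, rho_self hζ] using hpos
  · intro y hy
    have h1 := (hζ.2.2 x y).1
    simp only [Set.mem_ofPred_eq] at hy
    by_cases htop : gprodBB e x y = ⊤
    · rw [htop]; exact EReal.coe_lt_top K
    · have hbot : gprodBB e x y ≠ ⊥ := fun hb => by
        have := gprodBB_nonneg x y
        rw [hb] at this
        exact absurd this (not_le.2 EReal.bot_lt_zero)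
      rw [dExp, if_neg htop] at h1
      have h2 : Real.exp (-ζ * (gprodBB e x y).toReal) < Real.exp (-ζ * K) := by linarith
      rw [Real.exp_lt_exp] at h2
      rw [← EReal.coe_toReal htop hbot, EReal.coe_lt_coe_iff]
      have := hζ.1
      nlinarith

theorem completelyHausdorff_bd (hζ : VisualParam e ζ) :
    @CompletelyHausdorff (GBoundary S e) (bdTopology S e ζ) := by
  let _ : TopologicalSpace (GBoundary S e) := bdTopology S e ζ
  have hclosed : ∀ (x : GBoundary S e) (ε : ℝ), IsClosed {y | rhoChain e ζ x y ≤ ε} := by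
    intro x ε
    rw [← isOpen_compl_iff, isOpen_iff_forall_mem_open]
    intro y hy
    simp only [Set.mem_compl_iff, Set.mem_ofPred_eq, not_le] at hy
    refine ⟨{z | rhoChain e ζ y z < rhoChain e ζ x y - ε}, ?_, isOpen_ball y (sub_pos.2 hy), ?_⟩
    · intro z hz
      have h1 := hζ.2.1.2.2.2 x z y
      rw [hζ.2.1.2.2.1 z y] at h1
      simp only [Set.mem_compl_iff, Set.mem_ofPred_eq, not_le] at hz ⊢
      linarith
    · simpa only [Set.mem_ofPred_eq, rho_self hζ, sub_pos] using hy
  have hcl : ∀ (x : GBoundary S e) (ε : ℝ),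
      closure {y | rhoChain e ζ x y < ε} ⊆ {y | rhoChain e ζ x y ≤ ε} := fun x ε =>
    closure_minimal (Set.ofPred_subset_ofPred.2 fun _ => le_of_lt) (hclosed x ε)
  intro u v huv
  have hr : 0 < rhoChain e ζ u v :=
    lt_of_le_of_ne (hζ.2.1.1 u v) fun h => huv ((hζ.2.1.2.1 u v).1 h.symm)
  have hr3 : 0 < rhoChain e ζ u v / 3 := by positivity
  refine ⟨{y | rhoChain e ζ u y < rhoChain e ζ u v / 3},
    {y | rhoChain e ζ v y < rhoChain e ζ u v / 3}, isOpen_ball u hr3, isOpen_ball v hr3, ?_, ?_, ?_⟩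
  · simpa only [Set.mem_ofPred_eq, rho_self hζ] using hr3
  · simpa only [Set.mem_ofPred_eq, rho_self hζ] using hr3
  · refine Set.eq_empty_iff_forall_notMem.2 fun z hz => ?_
    have h1 := hcl _ _ hz.1
    have h2 := hcl _ _ hz.2
    have h3 := hζ.2.1.2.2.2 u z v
    rw [hζ.2.1.2.2.1 z v] at h3
    simp only [Set.mem_ofPred_eq] at h1 h2
    linarith

end Boundary

/-! ### Loxodromic elements -/

section Loxodromic

variable {G S : Type*} [Group G] [MetricSpace S]

/-- Displacement of the basepoint. -/
noncomputable def disp (act : G → S → S) (e : S) (g : G) : ℝ := dist (act g e) e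

variable {act : G → S → S} {e : S}

theorem dist_act_left (hact : IsIsometricAction act) (g h : G) (x y : S) :
    dist (act g x) (act h y) = dist (act (h⁻¹ * g) x) y := by
  rw [← (hact.2 h⁻¹).dist_eq, ← hact.1.2, ← hact.1.2, inv_mul_cancel, hact.1.1]

theorem dist_act_act (hact : IsIsometricAction act)
    (g h : G) : dist (act g e) (act h e) = disp act e (h⁻¹ * g) :=
  dist_act_left hact g h e e

theorem disp_inv (hact : IsIsometricAction act) (g : G) : disp act e g⁻¹ = disp act e g := by
  have := dist_act_left hact 1 g e e
  rw [hact.1.1, mul_one, dist_comm] at this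
  exact this.symm

theorem disp_inv_pow (hact : IsIsometricAction act)
    (g : G) (n : ℕ) : disp act e (g⁻¹ ^ n) = disp act e (g ^ n) := by
  rw [inv_pow, disp_inv hact]

theorem disp_one (hact : IsIsometricAction act) : disp act e (1 : G) = 0 := by
  rw [disp, hact.1.1, dist_self]

theorem dist_pow_add (hact : IsIsometricAction act) (f : G) (n k : ℕ) :
    dist (act (f ^ n) e) (act (f ^ (n + k)) e) = disp act e (f ^ k) := by
  rw [dist_comm, dist_act_act hact, pow_add, inv_mul_cancel_left]

/-- `f` is loxodromic with drift `κ` and defect `b`: displacements of powers grow linearly and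
are superadditive up to `2b`, that is, the orbit `n ↦ fⁿ e` is a quasi-geodesic. -/
def IsLox (act : G → S → S) (e : S) (f : G) (κ b : ℝ) : Prop :=
  0 < κ ∧ (∀ n : ℕ, n * κ ≤ disp act e (f ^ n)) ∧
  ∀ i j : ℕ, disp act e (f ^ i) + disp act e (f ^ j) ≤ disp act e (f ^ (i + j)) + 2 * b

/-- Local-to-global principle: if `|f²|` exceeds `|f|` by more than `3D` then `f` is
loxodromic. -/
theorem exists_isLox (hact : IsIsometricAction act) {D : ℝ} (hD : FourPt S D) {f : G}
    (hf : disp act e f + 3 * D < disp act e (f ^ 2)) : ∃ κ b, IsLox act e f κ b := by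
  have hD0 := hD.nonneg e
  set ℓ : ℕ → ℝ := fun n => disp act e (f ^ n) with hℓ
  have hd : ∀ n k, dist (act (f ^ n) e) (act (f ^ (n + k)) e) = ℓ k := dist_pow_add hact f
  have hl1 : ℓ 1 = disp act e f := by simp [hℓ]
  have hl0 : ℓ 0 = 0 := by simp only [hℓ, pow_zero]; exact disp_one hact
  have hl2 : ℓ 2 ≤ ℓ 1 + ℓ 1 := by
    have := dist_triangle (act (f ^ 0) e) (act (f ^ (0 + 1)) e) (act (f ^ (0 + 1 + 1)) e)
    rw [hd, hd] at this
    have h2 := hd 0 2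
    simp only [Nat.zero_add, Nat.reduceAdd] at this h2
    linarith
  have hf' : ℓ 1 + 3 * D < ℓ 2 := by rw [hl1]; exact hf
  have hstep : ∀ n, ℓ n + (ℓ 2 - ℓ 1 - 2 * D) ≤ ℓ (n + 1) := by
    intro n
    induction n with
    | zero => rw [hl0]; simp only [Nat.zero_add]; linarith
    | succ n ih =>
      have h := fourPt_dist hD (act (f ^ 0) e) (act (f ^ n) e) (act (f ^ (n + 1)) e)
        (act (f ^ (n + 2)) e)
      have e1 := hd 0 (n + 1)
      have e2 := hd 0 n
      have e3 := hd 0 (n + 2)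
      have e4 := hd n 2
      have e5 := hd n 1
      have e6 := hd (n + 1) 1
      simp only [Nat.zero_add, add_assoc, Nat.reduceAdd] at e1 e2 e3 e4 e5 e6 ⊢
      rw [e1, e2, e3, e4, e5, e6] at h
      rcases h with h | h <;> linarith
  refine ⟨ℓ 2 - ℓ 1 - 2 * D, (ℓ 1 + 2 * D - (ℓ 2 - ℓ 1 - 2 * D)) / 2, by linarith, ?_, ?_⟩
  · intro n
    change n * _ ≤ ℓ n
    induction n with
    | zero => rw [hl0]; simp
    | succ n ih => have := hstep n; push_cast; linarith
  · intro n k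
    change ℓ n + ℓ k ≤ ℓ (n + k) + _
    cases k with
    | zero => rw [hl0, Nat.add_zero]; linarith
    | succ k =>
      have h := fourPt_dist hD (act (f ^ 0) e) (act (f ^ n) e) (act (f ^ (n + 1)) e)
        (act (f ^ (n + 1 + k)) e)
      have e1 := hd 0 (n + 1)
      have e2 := hd 0 n
      have e3 := hd 0 (n + 1 + k)
      have e4 := hd n (1 + k)
      have e5 := hd n 1
      have e6 := hd (n + 1) k
      rw [← add_assoc] at e4
      simp only [Nat.zero_add] at e1 e2 e3
      rw [e1, e2, e3, e4, e5, e6] at h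
      have s1 := hstep n
      have s2 := hstep k
      rw [add_comm 1 k] at h
      rw [show n + (k + 1) = n + 1 + k by ring]
      rcases h with h | h <;> linarith

theorem IsLox.inv (hact : IsIsometricAction act)
    {f : G} {κ b : ℝ} (h : IsLox act e f κ b) : IsLox act e f⁻¹ κ b := by
  refine ⟨h.1, ?_, ?_⟩
  · intro n; rw [disp_inv_pow hact]; exact h.2.1 n
  · intro i j; simp only [disp_inv_pow hact]; exact h.2.2 i j

theorem IsLox.le_gprod (hact : IsIsometricAction act)
    {f : G} {κ b : ℝ} (h : IsLox act e f κ b) (n m : ℕ) :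
    min (disp act e (f ^ n)) (disp act e (f ^ m)) - b ≤
      gprod e (act (f ^ n) e) (act (f ^ m) e) := by
  have key : ∀ n k : ℕ, disp act e (f ^ n) - b ≤
      gprod e (act (f ^ n) e) (act (f ^ (n + k)) e) := by
    intro n k
    have h1 := h.2.2 n k
    simp only [gprod, dist_pow_add hact]
    simp only [disp] at h1 ⊢
    linarith
  rcases le_total n m with hnm | hnm
  · obtain ⟨k, rfl⟩ := Nat.exists_eq_add_of_le hnm
    exact (sub_le_sub_right (min_le_left _ _) b).trans (key n k)
  · obtain ⟨k, rfl⟩ := Nat.exists_eq_add_of_le hnm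
    rw [gprod_comm]
    exact (sub_le_sub_right (min_le_right _ _) b).trans (key m k)

theorem IsLox.le_gprod' (hact : IsIsometricAction act)
    {f : G} {κ b : ℝ} (h : IsLox act e f κ b) {n m k : ℕ} (hn : k ≤ n)
    (hm : k ≤ m) : k * κ - b ≤ gprod e (act (f ^ n) e) (act (f ^ m) e) := by
  refine le_trans (sub_le_sub_right (le_min ?_ ?_) b) (h.le_gprod hact n m)
  · refine le_trans (mul_le_mul_of_nonneg_right ?_ h.1.le) (h.2.1 n); exact_mod_cast hn
  · refine le_trans (mul_le_mul_of_nonneg_right ?_ h.1.le) (h.2.1 m); exact_mod_cast hm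

theorem IsLox.jointInf (hact : IsIsometricAction act) {f : G} {κ b : ℝ} (h : IsLox act e f κ b) :
    JointInf e (fun n => act (f ^ n) e) (fun n => act (f ^ n) e) := by
  intro c
  obtain ⟨N, hN⟩ := exists_nat_gt ((c + b) / κ)
  rw [div_lt_iff₀ h.1] at hN
  exact ⟨N, fun i hi j hj => by linarith [h.le_gprod' hact hi hj]⟩

theorem IsLox.exists_limit (hact : IsIsometricAction act)
    {f : G} {κ b : ℝ} (h : IsLox act e f κ b) :
    ∃ x, TendstoBd e (fun n : ℕ => act (f ^ n) e) x :=
  ⟨_, convToInfty_iff.2 (h.jointInf hact), rfl⟩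

theorem IsLox.gprod_inv_le (hact : IsIsometricAction act)
    {f : G} {κ b : ℝ} (h : IsLox act e f κ b) (n m : ℕ) :
    gprod e (act (f ^ n) e) (act (f⁻¹ ^ m) e) ≤ b := by
  have h1 := h.2.2 m n
  have h2 : dist (act (f ^ n) e) (act (f⁻¹ ^ m) e) = disp act e (f ^ (m + n)) := by
    rw [dist_act_act hact, inv_pow, inv_inv, pow_add]
  have h3 := disp_inv_pow hact f m (e := e)
  simp only [gprod, h2]
  simp only [disp] at h1 h3 ⊢
  linarith

theorem tendstoBd_unique {s : ℕ → S} {x y : GBoundary S e} (h : TendstoBd e s x)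
    (h' : TendstoBd e s y) : x = y := by
  obtain ⟨_, rfl⟩ := h
  obtain ⟨_, rfl⟩ := h'
  rfl

/-- The endpoint of any power sequence commuting with `f` is fixed by `f`. -/
theorem bdMap_fixed (hact : IsIsometricAction act) {f k : G} (hk : Commute f k) {x : GBoundary S e}
    (hx : TendstoBd e (fun n : ℕ => act (k ^ n) e) x) : bdMap e (act f) (hact.2 f) x = x := by
  refine tendstoBd_unique (hx.bdMap (hact.2 f)) (hx.perturb (B := disp act e f) fun n => ?_)
  rw [dist_comm, ← hact.1.2, dist_act_act hact, (hk.pow_right n).eq, inv_mul_cancel_left]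

theorem tendsto_of_fixed (hact : IsIsometricAction act)
    {f : G} {z : GBoundary S e} (hz : bdMap e (act f) (hact.2 f) z = z)
    {s : ℕ → S} (hs : TendstoBd e s z) (n : ℕ) : TendstoBd e (fun i => act (f ^ n) (s i)) z := by
  induction n with
  | zero => simpa only [pow_zero, hact.1.1] using hs
  | succ n ih =>
    have := ih.bdMap (hact.2 f)
    rw [hz] at this
    simpa only [pow_succ', hact.1.2] using this

/-- A boundary point outside a neighbourhood of the repelling point is carried by `fⁿ` close to
the attracting point, uniformly: this rests on `(fⁿz·fⁿe)_e = |fⁿ| − (z·f⁻ⁿe)_e`. -/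
theorem IsLox.attract (hact : IsIsometricAction act)
    {D : ℝ} (hD : FourPt S D) {f : G} {κ b : ℝ} (h : IsLox act e f κ b)
    {x y : GBoundary S e} (hx : TendstoBd e (fun n : ℕ => act (f⁻¹ ^ n) e) x)
    (hy : TendstoBd e (fun n : ℕ => act (f ^ n) e) y) (K₁ K₂ : ℝ) :
    ∃ N : ℕ, ∀ n : ℕ, N < n → ∀ z : GBoundary S e, ¬ ((K₁ : EReal) < gprodBB e x z) →
      (K₂ : EReal) < gprodBB e y (bdMap e (act (f ^ n)) (hact.2 _) z) := by
  have hD0 := hD.nonneg e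
  set c := K₁ + 2 * D + 1 with hc
  obtain ⟨N, hN⟩ := exists_nat_gt ((|c| + |b| + 4 * D + |K₂|) / κ)
  rw [div_lt_iff₀ h.1] at hN
  refine ⟨N, fun n hn z hz => ?_⟩
  have hnκ : |c| + |b| + 4 * D + |K₂| < n * κ :=
    hN.trans_le (mul_le_mul_of_nonneg_right (by exact_mod_cast hn.le) h.1.le)
  have c1 := le_abs_self c
  have c2 := le_abs_self b
  have c3 := le_abs_self K₂
  have c4 := abs_nonneg c
  have c5 := abs_nonneg b
  have c6 := abs_nonneg K₂
  obtain ⟨s, hs⟩ := exists_tendstoBd z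
  have hev : ∃ N₀, ∀ i, N₀ ≤ i → ∀ j, N₀ ≤ j → gprod e (act (f⁻¹ ^ i) e) (s j) < c := by
    by_contra! hcon
    refine hz (lt_of_lt_of_le ?_ (le_gprodBB hD hx hs hcon))
    exact_mod_cast (by rw [hc]; linarith : K₁ < c - 2 * D)
  obtain ⟨N₀, hN₀⟩ := hev
  have hbd : ∀ j, N₀ ≤ j → gprod e (act (f⁻¹ ^ n) e) (s j) < c + D := by
    intro j hj
    by_contra! hcon
    have h1 := (h.inv hact).le_gprod' hact (le_max_left n N₀) (le_refl n)
    have h2 := hD.two e (k := c + D) (by linarith) hcon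
    linarith [hN₀ _ (le_max_right n N₀) j hj]
  have hfin : ((n * κ - |c| - |b| - 2 * D - 2 * D : ℝ) : EReal) ≤
      gprodBB e y (bdMap e (act (f ^ n)) (hact.2 _) z) := by
    refine le_gprodBB hD hy (hs.bdMap (hact.2 (f ^ n))) fun M => ?_
    refine ⟨max M n, le_max_left _ _, max M N₀, le_max_left _ _, ?_⟩
    set j := max M N₀
    have h1 := h.le_gprod' hact (le_max_right M n) (le_refl n)
    have h2 : gprod e (act (f ^ n) e) (act (f ^ n) (s j)) =
        disp act e (f ^ n) - gprod e (act (f⁻¹ ^ n) e) (s j) := by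
      have e1 := disp_inv_pow hact f n (e := e)
      have e3 : dist (act (f⁻¹ ^ n) e) (s j) = dist (act (f ^ n) (s j)) e := by
        rw [← (hact.2 (f ^ n)).dist_eq, ← hact.1.2, inv_pow, mul_inv_cancel, hact.1.1, dist_comm]
      simp only [disp] at e1 ⊢
      simp only [gprod, (hact.2 (f ^ n)).dist_eq, e3, e1]
      rw [dist_comm e (s j)]
      ring
    have h3 := h.2.1 n
    have h4 := hbd j (le_max_right _ _)
    have h5 := hD.two e (k := n * κ - |c| - |b| - D) (by linarith : _ ≤ gprod e
      (act (f ^ max M n) e) (act (f ^ n) e)) (by linarith : _ ≤ gprod e (act (f ^ n) e)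
      (act (f ^ n) (s j)))
    linarith
  refine lt_of_lt_of_le ?_ hfin
  exact_mod_cast (by linarith : K₂ < n * κ - |c| - |b| - 2 * D - 2 * D)

theorem IsLox.northSouthAt (hact : IsIsometricAction act)
    {D ζ : ℝ} (hD : FourPt S D) (hζ : VisualParam e ζ) {f : G} {κ b : ℝ}
    (h : IsLox act e f κ b) {x y : GBoundary S e}
    (hx : TendstoBd e (fun n : ℕ => act (f⁻¹ ^ n) e) x)
    (hy : TendstoBd e (fun n : ℕ => act (f ^ n) e) y) :
    @NorthSouthAt G (GBoundary S e) _ (bdTopology S e ζ)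
      (fun g => bdMap e (act g) (hact.2 g)) f x y := by
  have hxy : x ≠ y := by
    rintro rfl
    obtain ⟨N, hN⟩ := jointInf_of_tendsto hD hy hx (b + 1)
    linarith [hN N le_rfl N le_rfl, h.gprod_inv_le hact N N]
  refine ⟨hxy, fun z => ⟨fun hz => ?_, ?_⟩, ?_⟩
  · by_contra! hc
    obtain ⟨s, hs⟩ := exists_tendstoBd z
    -- A third fixed point would have infinite Gromov product with the attracting point.
    refine hc.2 (eq_of_gprodBB_eq_top hζ (EReal.eq_top_iff_forall_lt _ |>.2 fun c => ?_)).symm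
    have hK : ∃ K : ℝ, ¬ ((K : EReal) < gprodBB e x z) := by
      by_contra! hcon
      exact hc.1 (eq_of_gprodBB_eq_top hζ (EReal.eq_top_iff_forall_lt _ |>.2 hcon)).symm
    obtain ⟨K, hK⟩ := hK
    obtain ⟨N, hN⟩ := h.attract hact hD hx hy K c
    have h1 := hN (N + 1) (Nat.lt_succ_self N) z hK
    rwa [tendstoBd_unique (hs.bdMap (hact.2 (f ^ (N + 1)))) (tendsto_of_fixed hact hz hs (N + 1))]
      at h1
  · rintro (rfl | rfl)
    · exact bdMap_fixed hact (Commute.refl f).inv_right hx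
    · exact bdMap_fixed hact (Commute.refl f) hy
  · intro U V hU hV hxU hyV
    obtain ⟨K₁, hK₁⟩ := exists_gprod_subset hζ hU hxU
    obtain ⟨K₂, hK₂⟩ := exists_gprod_subset hζ hV hyV
    obtain ⟨N, hN⟩ := h.attract hact hD hx hy K₁ K₂
    refine ⟨N, fun n hn => ?_⟩
    rintro _ ⟨z, hz, rfl⟩
    exact hK₂ _ (hN n hn z fun hlt => hz (hK₁ z hlt))

/-- A group with two distinct limit points contains a loxodromic element. If no element were
loxodromic, `ge` and `g⁻¹e` would be close in direction for every `g`; for `g`, `h` pointing to the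
two limit points, `gh` then moves `e` towards the first and `(gh)⁻¹` towards the second. -/
theorem exists_loxodromic (hact : IsIsometricAction act)
    {D ζ : ℝ} (hD : FourPt S D) (hζ : VisualParam e ζ)
    {x y : GBoundary S e} (hx : x ∈ limitSet act e) (hy : y ∈ limitSet act e) (hxy : x ≠ y) :
    ∃ (f : G) (κ b : ℝ), IsLox act e f κ b := by
  have hD0 := hD.nonneg e
  by_contra hno
  have hno : ∀ g : G, disp act e (g ^ 2) ≤ disp act e g + 3 * D := by
    intro g
    by_contra! hc
    obtain ⟨κ, b, hl⟩ := exists_isLox hact hD hc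
    exact hno ⟨g, κ, b, hl⟩
  have hbase : ∀ x ∈ limitSet act e, ∃ gs : ℕ → G, TendstoBd e (fun n => act (gs n) e) x := by
    rintro x ⟨s, gs, h⟩
    exact ⟨gs, h.perturb (B := dist s e) fun n => by rw [(hact.2 _).dist_eq]⟩
  obtain ⟨gs, hgs⟩ := hbase x hx
  obtain ⟨hs, hhs⟩ := hbase y hy
  obtain ⟨L, hL0, N, hN⟩ := gprod_bounded_of_ne hD hζ hxy hgs hhs
  set T := 4 * L + 40 * D + 10 with hT
  obtain ⟨N₁, hN₁⟩ := jointInf_of_tendsto hD hgs hgs T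
  obtain ⟨N₂, hN₂⟩ := jointInf_of_tendsto hD hhs hhs T
  obtain ⟨g, hg, hgT⟩ : ∃ g : G, g = gs (max N N₁) ∧ T ≤ disp act e g := by
    refine ⟨_, rfl, ?_⟩
    have := hN₁ _ (le_max_right N N₁) _ (le_max_right N N₁)
    rwa [gprod_self] at this
  obtain ⟨h, hh, hhT⟩ : ∃ h : G, h = hs (max N N₂) ∧ T ≤ disp act e h := by
    refine ⟨_, rfl, ?_⟩
    have := hN₂ _ (le_max_right N N₂) _ (le_max_right N N₂)
    rwa [gprod_self] at this
  have hgh : gprod e (act g e) (act h e) ≤ L := by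
    rw [hg, hh]; exact hN _ (le_max_left _ _) _ (le_max_left _ _)
  have hself : ∀ k : G, gprod e (act k e) (act k⁻¹ e) = disp act e k - disp act e (k ^ 2) / 2 := by
    intro k
    have e1 := disp_inv hact k (e := e)
    have e2 : dist (act k e) (act k⁻¹ e) = disp act e (k ^ 2) := by
      rw [dist_act_act hact, inv_inv, sq]
    simp only [gprod, e2]
    simp only [disp] at e1 ⊢
    rw [e1]; ring
  have hg1 : L + 4 * D + 1 ≤ gprod e (act g e) (act g⁻¹ e) := by
    rw [hself]; linarith [hno g]
  have hh1 : L + 4 * D + 1 ≤ gprod e (act h e) (act h⁻¹ e) := by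
    rw [hself]; linarith [hno h]
  have hgih : gprod e (act g⁻¹ e) (act h e) ≤ L + D + 1 := by
    by_contra! hc
    have := hD.two e (k := L + D + 1) (by linarith : _ ≤ gprod e (act g e) (act g⁻¹ e)) hc.le
    linarith
  have hghi : gprod e (act g e) (act h⁻¹ e) ≤ L + D + 1 := by
    by_contra! hc
    have := hD.two e (k := L + D + 1) hc.le
      (by rw [gprod_comm]; linarith : _ ≤ gprod e (act h⁻¹ e) (act h e))
    linarith
  set f := g * h with hf
  have hfd : disp act e f = disp act e g + disp act e h - 2 * gprod e (act g⁻¹ e) (act h e) := by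
    have e1 := disp_inv hact g (e := e)
    have e2 := dist_act_act hact h g⁻¹ (e := e)
    rw [inv_inv] at e2
    simp only [gprod]
    rw [dist_comm (act g⁻¹ e) (act h e), e2]
    simp only [disp] at e1 ⊢
    rw [e1]; ring
  have h1 : T / 2 ≤ gprod e (act g e) (act f e) := by
    have e2 := dist_act_act hact f g (e := e)
    rw [hf, inv_mul_cancel_left] at e2
    simp only [gprod]
    rw [dist_comm (act g e) (act f e), hf, e2]
    simp only [disp] at hfd hgT hhT ⊢
    linarith
  have h2 : T / 2 ≤ gprod e (act f⁻¹ e) (act h⁻¹ e) := by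
    have e2 := dist_act_act hact f⁻¹ h⁻¹ (e := e)
    have e3 := disp_inv hact h (e := e)
    have e4 := disp_inv hact f (e := e)
    have e5 := disp_inv hact g (e := e)
    have e6 : h⁻¹⁻¹ * f⁻¹ = g⁻¹ := by rw [hf]; group
    rw [e6, e5] at e2
    simp only [gprod]
    rw [e2]
    simp only [disp] at hfd hgT hhT e3 e4 ⊢
    linarith
  have h3 : gprod e (act f e) (act f⁻¹ e) ≤ L + 3 * D + 2 := by
    by_contra! hc
    have := hD.three e (k := L + 3 * D + 2)
      (by linarith : _ ≤ gprod e (act g e) (act f e)) hc.le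
      (by linarith : _ ≤ gprod e (act f⁻¹ e) (act h⁻¹ e))
    linarith
  rw [hself] at h3
  linarith [hno f]

end Loxodromic

/-! ### Virtually cyclic groups are elementary -/

section VirtCyclic

variable {G S : Type*} [Group G] [MetricSpace S] {act : G → S → S} {e : S}

theorem IsLox.limit_eq (hact : IsIsometricAction act) {D ζ : ℝ} (hD : FourPt S D)
    (hζ : VisualParam e ζ) {f : G} {κ b : ℝ} (h : IsLox act e f κ b) {x y : GBoundary S e}
    (hy : TendstoBd e (fun n : ℕ => act (f ^ n) e) y) {t : ℕ → S} (ht : TendstoBd e t x)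
    (hfr : ∀ N, ∃ n, N ≤ n ∧ ∃ m : ℕ, t n = act (f ^ m) e) : x = y := by
  refine eq_of_frequently hD hζ ht hy fun c N => ?_
  obtain ⟨N₁, hN₁⟩ := jointInf_of_tendsto hD ht ht (c + b)
  obtain ⟨N₂, hN₂⟩ := jointInf_of_tendsto hD hy hy (c + b)
  obtain ⟨i, hi, m, hm⟩ := hfr (max N N₁)
  refine ⟨i, (le_max_left _ _).trans hi, max N N₂, le_max_left _ _, ?_⟩
  have h1 := hN₁ i ((le_max_right _ _).trans hi) i ((le_max_right _ _).trans hi)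
  have h2 := hN₂ _ (le_max_right N N₂) _ (le_max_right N N₂)
  have h3 := h.le_gprod hact m (max N N₂)
  rw [gprod_self, hm] at h1
  rw [gprod_self] at h2
  rw [hm]
  have h4 : c + b ≤ min (disp act e (f ^ m)) (disp act e (f ^ (max N N₂))) := le_min h1 h2
  linarith

/-- In a virtually cyclic group every orbit is at bounded distance from the orbit of the powers of
a loxodromic element. -/
theorem orbit_near_powers (hact : IsIsometricAction act) (hvc : VirtuallyCyclic G) {f : G}
    {κ b : ℝ} (h : IsLox act e f κ b) (s : S) :
    ∃ B : ℝ, ∀ g : G, ∃ m : ℤ, dist (act g s) (act (f ^ m) e) ≤ B := by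
  obtain ⟨H, hcyc, hidx⟩ := hvc
  obtain ⟨⟨k, hkH⟩, hk⟩ := hcyc.exists_generator
  have hgen : ∀ a ∈ H, ∃ i : ℤ, k ^ i = a := by
    intro a ha
    obtain ⟨i, hi⟩ := Subgroup.mem_zpowers_iff.1 (hk ⟨a, ha⟩)
    exact ⟨i, by simpa using congrArg Subtype.val hi⟩
  obtain ⟨n, hn, -, hnH⟩ := Subgroup.exists_pow_mem_of_index_ne_zero hidx f
  obtain ⟨j, hj⟩ := hgen _ hnH
  have hj0 : j ≠ 0 := by
    rintro rfl
    have h1 := h.2.1 n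
    rw [← hj, zpow_zero, disp_one hact] at h1
    have : (0 : ℝ) < n := by exact_mod_cast hn
    nlinarith [mul_pos this h.1]
  have : H.FiniteIndex := ⟨hidx⟩
  let F : (G ⧸ H) × Fin j.natAbs → ℝ := fun p => dist (act (k ^ (p.2 : ℕ)) (act p.1.out⁻¹ s)) e
  obtain ⟨B, hB⟩ := (Set.finite_range F).bddAbove
  refine ⟨B, fun g => ?_⟩
  set q : G ⧸ H := ((g⁻¹ : G) : G ⧸ H) with hq
  have hmem : g * q.out ∈ H := by
    have := QuotientGroup.eq.1 (QuotientGroup.out_eq' q).symm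
    rwa [inv_inv] at this
  obtain ⟨i, hi⟩ := hgen _ hmem
  have hr0 : 0 ≤ i % j := Int.emod_nonneg i hj0
  have hr1 : (i % j).toNat < j.natAbs := by
    have := Int.emod_lt_abs i hj0
    rw [Int.abs_eq_natAbs] at this
    omega
  refine ⟨n * (i / j), ?_⟩
  have hg : g = f ^ (n * (i / j)) * (k ^ (i % j).toNat * q.out⁻¹) := by
    rw [zpow_mul, zpow_natCast, ← hj, ← zpow_mul, ← mul_assoc, ← zpow_natCast k,
      Int.toNat_of_nonneg hr0, ← zpow_add, Int.mul_ediv_add_emod, hi, mul_inv_cancel_right]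
  have hF := hB ⟨(q, ⟨(i % j).toNat, hr1⟩), rfl⟩
  conv_lhs => rw [hg]
  rw [hact.1.2, (hact.2 _).dist_eq, hact.1.2]
  exact hF

theorem not_virtuallyCyclic (hact : IsIsometricAction act) {D ζ : ℝ} (hD : FourPt S D)
    (hζ : VisualParam e ζ) (hne : NonelemAction act e) {f : G} {κ b : ℝ}
    (h : IsLox act e f κ b) : ¬ VirtuallyCyclic G := by
  intro hvc
  obtain ⟨y, hy⟩ := h.exists_limit hact
  obtain ⟨x, hx⟩ := (h.inv hact).exists_limit hact
  have key : ∀ z ∈ limitSet act e, z = x ∨ z = y := by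
    rintro z ⟨s, gs, hz⟩
    obtain ⟨B, hB⟩ := orbit_near_powers hact hvc h s
    choose m hm using fun n => hB (gs n)
    have ht := hz.perturb hm
    by_cases hc : ∀ N, ∃ n, N ≤ n ∧ 0 ≤ m n
    · right
      refine h.limit_eq hact hD hζ hy ht fun N => ?_
      obtain ⟨n, hn, hmn⟩ := hc N
      obtain ⟨i, hi⟩ := Int.eq_ofNat_of_zero_le hmn
      exact ⟨n, hn, i, by rw [hi, zpow_natCast]⟩
    · left
      push Not at hc
      obtain ⟨N₀, hN₀⟩ := hc
      refine (h.inv hact).limit_eq hact hD hζ hx ht fun N => ?_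
      obtain ⟨i, hi⟩ := Int.eq_ofNat_of_zero_le
        (neg_nonneg.2 (hN₀ (max N N₀) (le_max_right _ _)).le)
      refine ⟨max N N₀, le_max_left _ _, i, ?_⟩
      rw [← neg_neg (m (max N N₀)), hi, zpow_neg, zpow_natCast, inv_pow]
  obtain ⟨p, q, r, hp, hq, hr, hpq, hqr, hpr⟩ := hne
  rcases key p hp with rfl | rfl <;> rcases key q hq with rfl | rfl <;>
    rcases key r hr with rfl | rfl <;> simp_all

end VirtCyclic

/-! ### Condition (C) -/

section CondC

variable {G S : Type*} [Group G] [MetricSpace S] {act : G → S → S} {e : S}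

/-- For fixed `x`, `y` and far apart `c₁`, `c₂`, only finitely many translates of a geodesic
`[x, y]` pass close to both `c₁` and `c₂`. -/
theorem finite_passing {δ : ℝ} (hgeo : GeodesicSpace S) (hhyp : DeltaHyperbolic S δ)
    (hact : IsIsometricAction act) {C C' R : ℝ} (hC' : C' = C + 2 * δ + 3)
    (hR : ∀ x y : S, R ≤ dist x y →
      {g : G | dist x (act g x) ≤ 2 * C' ∧ dist y (act g y) ≤ 2 * C'}.Finite)
    {c₁ c₂ : S} (hc : R + 2 * C' ≤ dist c₁ c₂) (x y : S) :
    {g : G | gprod c₁ (act g x) (act g y) ≤ C ∧ gprod c₂ (act g x) (act g y) ≤ C}.Finite := by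
  obtain ⟨_, γ, h0, h1, hγ, -⟩ := hgeo x y
  let n := ⌊dist x y⌋₊ + 1
  have hclose : ∀ (g : G) (c : S), gprod c (act g x) (act g y) ≤ C →
      ∃ i ∈ Finset.range n, dist (act g (γ i)) c ≤ C' := by
    intro g c hg
    have hdist : dist (act g x) (act g y) = dist x y := (hact.2 g).dist_eq x y
    obtain ⟨t, ht, hd⟩ := exists_close_point hgeo hhyp (x := act g x) (y := act g y)
      (γ := fun t => act g (γ t)) (by rw [h0]) (by rw [hdist, h1])
      (by rw [hdist]; intro s hs t ht; rw [(hact.2 g).dist_eq]; exact hγ s hs t ht) c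
    rw [hdist] at ht
    refine ⟨⌊t⌋₊, Finset.mem_range.2 (Nat.lt_succ_of_le (Nat.floor_mono ht.2)), ?_⟩
    have hf1 := Nat.floor_le ht.1
    have hf2 := Nat.lt_floor_add_one t
    have h3 : dist (act g (γ ⌊t⌋₊)) (act g (γ t)) ≤ 1 := by
      rw [(hact.2 g).dist_eq, hγ _ ⟨Nat.cast_nonneg _, hf1.trans ht.2⟩ _ ht, abs_le]
      constructor <;> linarith
    have h4 := dist_triangle (act g (γ ⌊t⌋₊)) (act g (γ t)) c
    linarith
  have hfin : ∀ i j : ℕ,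
      {g : G | dist (act g (γ i)) c₁ ≤ C' ∧ dist (act g (γ j)) c₂ ≤ C'}.Finite := by
    intro i j
    rcases Set.eq_empty_or_nonempty
      {g : G | dist (act g (γ i)) c₁ ≤ C' ∧ dist (act g (γ j)) c₂ ≤ C'} with hemp | ⟨g₀, hg₀⟩
    · rw [hemp]; exact Set.finite_empty
    · rw [Set.mem_ofPred_eq] at hg₀
      have hdist : R ≤ dist (γ i) (γ j) := by
        rw [← (hact.2 g₀).dist_eq]
        have t1 := dist_triangle c₁ (act g₀ (γ i)) c₂
        have t2 := dist_triangle (act g₀ (γ i)) (act g₀ (γ j)) c₂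
        rw [dist_comm c₁ (act g₀ (γ i))] at t1
        linarith [hg₀.1, hg₀.2]
      refine Set.Finite.of_finite_image ((hR _ _ hdist).subset ?_)
        (f := fun g => g₀⁻¹ * g) (mul_right_injective g₀⁻¹).injOn
      rintro _ ⟨g, hg, rfl⟩
      rw [Set.mem_ofPred_eq] at hg ⊢
      constructor
      · rw [dist_comm, ← dist_act_left hact]
        exact (dist_triangle_right _ _ c₁).trans (by linarith [hg.1, hg₀.1])
      · rw [dist_comm, ← dist_act_left hact]
        exact (dist_triangle_right _ _ c₂).trans (by linarith [hg.2, hg₀.2])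
  refine Set.Finite.subset (Set.Finite.biUnion (Finset.range n).finite_toSet fun i _ =>
    Set.Finite.biUnion (Finset.range n).finite_toSet fun j _ => hfin i j) ?_
  intro g hg
  rw [Set.mem_ofPred_eq] at hg
  obtain ⟨i, hi, h2⟩ := hclose g c₁ hg.1
  obtain ⟨j, hj, h3⟩ := hclose g c₂ hg.2
  simp only [Set.mem_iUnion]
  exact ⟨i, hi, j, hj, h2, h3⟩

/-- A pair of distinct boundary points has a point `w` that lies, up to an error depending only on
`D`, on every geodesic joining points close to the pair. -/
theorem exists_pair_center {D ζ : ℝ} (hgeo : GeodesicSpace S) {δ : ℝ}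
    (hhyp : DeltaHyperbolic S δ) (hD : FourPt S D) (hζ : VisualParam e ζ)
    {p q : GBoundary S e} (hpq : p ≠ q) :
    ∃ (w : S) (A₁ A₂ : Set (GBoundary S e)), @IsOpen _ (bdTopology S e ζ) A₁ ∧
      @IsOpen _ (bdTopology S e ζ) A₂ ∧ p ∈ A₁ ∧ q ∈ A₂ ∧
      ∀ p' ∈ A₁, ∀ q' ∈ A₂, ∀ s t : ℕ → S, TendstoBd e s p' → TendstoBd e t q' →
        ∃ N, ∀ n, N ≤ n → gprod w (s n) (t n) ≤ 2 * D + 1 := by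
  have hD0 := hD.nonneg e
  obtain ⟨ps, hps⟩ := exists_tendstoBd p
  obtain ⟨qs, hqs⟩ := exists_tendstoBd q
  obtain ⟨L, hL0, N₀, hN₀⟩ := gprod_bounded_of_ne hD hζ hpq hps hqs
  -- `L + 2δ + 2` bounds the distance from `e` to the centre `w`.
  set T := (L + 2 * δ + 2) + 3 * D + 1 with hT
  obtain ⟨N₁, hN₁⟩ := jointInf_of_tendsto hD hps hps T
  obtain ⟨N₂, hN₂⟩ := jointInf_of_tendsto hD hqs hqs T
  set N := max N₀ (max N₁ N₂) with hN
  have hNN₀ : N₀ ≤ N := le_max_left _ _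
  have hNN₁ : N₁ ≤ N := (le_max_left _ _).trans (le_max_right _ _)
  have hNN₂ : N₂ ≤ N := (le_max_right _ _).trans (le_max_right _ _)
  obtain ⟨Γ, hΓ⟩ := hgeo (ps N) (qs N)
  obtain ⟨γ, h0, h1, hγ, rfl⟩ := id hΓ
  obtain ⟨τ, hτ, hd⟩ := exists_close_point hgeo hhyp h0 h1 hγ e
  have hw := hΓ.dist_add ⟨τ, hτ, rfl⟩
  have hw0 : gprod (γ τ) (ps N) (qs N) = 0 := by
    rw [dist_comm (γ τ)] at hw
    simp only [gprod]; linarith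
  have hwe : dist (γ τ) e ≤ L + 2 * δ + 2 := by linarith [hN₀ N hNN₀ N hNN₀]
  obtain ⟨A₁, hA₁, hpA, hA₁'⟩ := exists_open_gprod hζ p T
  obtain ⟨A₂, hA₂, hqA, hA₂'⟩ := exists_open_gprod hζ q T
  refine ⟨γ τ, A₁, A₂, hA₁, hA₂, hpA, hqA, fun p' hp' q' hq' s t hs ht => ?_⟩
  obtain ⟨M₁, hM₁⟩ := lt_gprod_of_lt_gprodBB (hA₁' p' hp') hps hs
  obtain ⟨M₂, hM₂⟩ := lt_gprod_of_lt_gprodBB (hA₂' q' hq') hqs ht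
  refine ⟨max M₁ M₂, fun n hn => ?_⟩
  have hn₁ : M₁ ≤ n := (le_max_left _ _).trans hn
  have hn₂ : M₂ ≤ n := (le_max_right _ _).trans hn
  have g1 := hD.two e (hN₁ N hNN₁ (max N₁ M₁) (le_max_left _ _))
    (hM₁ (max N₁ M₁) (le_max_right _ _) n hn₁).le
  have g2 := hD.two e (hN₂ N hNN₂ (max N₂ M₂) (le_max_left _ _))
    (hM₂ (max N₂ M₂) (le_max_right _ _) n hn₂).le
  have g3 := gprod_base e (γ τ) (ps N) (s n)
  have g4 := gprod_base e (γ τ) (qs N) (t n)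
  rw [gprod_comm (γ τ) (qs N)] at g4
  by_contra! hcon
  have g5 := hD.three (γ τ) (k := 2 * D + 1) (by linarith) hcon.le (by linarith :
    2 * D + 1 ≤ gprod (γ τ) (t n) (qs N))
  linarith

/-- If `w` lies almost on geodesics joining points close to `u`, then `w` itself is close
to `u`. -/
theorem near_of_pair {D : ℝ} (hD : FourPt S D) {u u₁ u₂ : GBoundary S e} {K : ℝ}
    (h₁ : (K : EReal) < gprodBB e u u₁) (h₂ : (K : EReal) < gprodBB e u u₂) {us s t : ℕ → S}
    (hus : TendstoBd e us u) (hs : TendstoBd e s u₁) (ht : TendstoBd e t u₂) {M : ℕ}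
    (hM : ∀ i, M ≤ i → ∀ j, M ≤ j → K ≤ gprod e (us i) (us j)) {w : S} {C : ℝ} (hC : 0 ≤ C)
    (hw : ∃ N, ∀ n, N ≤ n → gprod w (s n) (t n) ≤ C) :
    K - 3 * D - C ≤ gprod e w (us M) := by
  have hD0 := hD.nonneg e
  obtain ⟨N, hN⟩ := hw
  obtain ⟨M₁, hM₁⟩ := lt_gprod_of_lt_gprodBB h₁ hus hs
  obtain ⟨M₂, hM₂⟩ := lt_gprod_of_lt_gprodBB h₂ hus ht
  set n := max N (max M (max M₁ M₂)) with hn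
  have i0 : N ≤ n := le_max_left _ _
  have i1 : M ≤ n := (le_max_left _ _).trans (le_max_right _ _)
  have i2 : M₁ ≤ n :=
    (le_max_left _ _).trans ((le_max_right _ _).trans (le_max_right _ _))
  have i3 : M₂ ≤ n :=
    (le_max_right _ _).trans ((le_max_right _ _).trans (le_max_right _ _))
  have g1 := hD.two e (hM M le_rfl n i1) (hM₁ n i2 n i2).le
  have g2 := hD.two e (hM M le_rfl n i1) (hM₂ n i3 n i3).le
  have g3 := hD.two e ((gprod_comm e _ _).le.trans' g1 : _ ≤ gprod e (s n) (us M)) g2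
  have g4 := hN n i0
  -- `(w·s)_e + (w·t)_e = d(w,e) + (s·t)_e − (s·t)_w`, and `(w·t)_e ≤ d(w,e)`.
  have g5 : gprod e (s n) (t n) - C ≤ gprod e w (s n) := by
    have t1 := dist_triangle_left (t n) e w
    simp only [gprod] at g4 ⊢
    rw [dist_comm w (s n)]
    rw [dist_comm w (t n)] at t1
    linarith
  have g6 := hD.two e (k := K - 2 * D - C) (by linarith : _ ≤ gprod e w (s n))
    (by rw [gprod_comm]; linarith : _ ≤ gprod e (s n) (us M))
  linarith

theorem conditionC_bd {δ D ζ : ℝ} (hgeo : GeodesicSpace S)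
    (hhyp : DeltaHyperbolic S δ) (hδ : 0 ≤ δ) (hD : FourPt S D) (hact : IsIsometricAction act)
    (hacyl : AcylindricalAction act) (hζ : VisualParam e ζ) :
    @ConditionC G (GBoundary S e) (bdTopology S e ζ)
      (fun g => bdMap e (act g) (hact.2 g)) := by
  let _ : TopologicalSpace (GBoundary S e) := bdTopology S e ζ
  have hD0 := hD.nonneg e
  rintro ⟨u, _⟩ ⟨v, _⟩ (rfl : u = _) (rfl : v = _) huv
  have huv : u ≠ v := fun h => huv (by rw [h])
  obtain ⟨us, hus⟩ := exists_tendstoBd u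
  obtain ⟨vs, hvs⟩ := exists_tendstoBd v
  obtain ⟨L, hL0, N₀, hN₀⟩ := gprod_bounded_of_ne hD hζ huv hus hvs
  -- Geodesics from near `u` to near `v` pass within about `C` of the marker points below; the
  -- markers are at distance `r` from `e`, which makes them far enough apart for acylindricity.
  set C := L + 3 * D + 1 with hC
  set C' := C + 2 * δ + 3 with hC'
  obtain ⟨R, _, hR0, _, hR⟩ := hacyl (2 * C') (by linarith)
  set r := R + C' + L + 2 * D + 1 with hr
  set K := r + 3 * D + (2 * D + 1) with hK
  obtain ⟨N₁, hN₁⟩ := jointInf_of_tendsto hD hus hus K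
  obtain ⟨N₂, hN₂⟩ := jointInf_of_tendsto hD hvs hvs K
  set M := max N₀ (max N₁ N₂) with hM
  have hM₀ : N₀ ≤ M := le_max_left _ _
  have hM₁ : N₁ ≤ M := (le_max_left _ _).trans (le_max_right _ _)
  have hM₂ : N₂ ≤ M := (le_max_right _ _).trans (le_max_right _ _)
  have huM : ∀ i, M ≤ i → ∀ j, M ≤ j → K ≤ gprod e (us i) (us j) := fun i hi j hj =>
    hN₁ i (hM₁.trans hi) j (hM₁.trans hj)
  have hvM : ∀ i, M ≤ i → ∀ j, M ≤ j → K ≤ gprod e (vs i) (vs j) := fun i hi j hj =>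
    hN₂ i (hM₂.trans hi) j (hM₂.trans hj)
  have huv0 := hN₀ M hM₀ M hM₀
  have hmark : ∀ z : S, K ≤ dist z e → ∃ c, dist c e = r ∧ gprod e z c = r := by
    intro z hz
    obtain ⟨Γ, hΓ⟩ := hgeo e z
    obtain ⟨γ, h0, h1, hγ, rfl⟩ := id hΓ
    have hrm : r ∈ Set.Icc 0 (dist e z) :=
      ⟨by linarith, by rw [dist_comm]; linarith⟩
    have h2 := hγ r hrm 0 ⟨le_rfl, dist_nonneg⟩
    have h3 := hΓ.dist_add ⟨r, hrm, rfl⟩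
    rw [h0, sub_zero, abs_of_nonneg hrm.1] at h2
    refine ⟨γ r, h2, ?_⟩
    rw [dist_comm e, dist_comm (γ r) z, dist_comm e z] at h3
    simp only [gprod]; linarith
  obtain ⟨c₁, hc₁, hc₁'⟩ := hmark (us M) (by have := huM M le_rfl M le_rfl; rwa [gprod_self] at this)
  obtain ⟨c₂, hc₂, hc₂'⟩ := hmark (vs M) (by have := hvM M le_rfl M le_rfl; rwa [gprod_self] at this)
  have hsep : ∀ z z' : S, r ≤ gprod e (us M) z → r ≤ gprod e (vs M) z' →
      gprod e z z' ≤ L + 2 * D + 1 := by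
    intro z z' hz hz'
    by_contra! hcon
    have := hD.three e (k := L + 2 * D + 1) (by linarith : _ ≤ gprod e (us M) z) hcon.le
      (by rw [gprod_comm]; linarith : _ ≤ gprod e z' (vs M))
    linarith
  have hcc : R + 2 * C' ≤ dist c₁ c₂ := by
    have := hsep c₁ c₂ hc₁'.ge hc₂'.ge
    simp only [gprod] at this
    linarith
  have hpass : ∀ z z' a c : S, dist c e = r → gprod e a c = r → r ≤ gprod e z a →
      gprod e z z' ≤ L + 2 * D + 1 → gprod c z z' ≤ C := by
    intro z z' a c h1 h2 h3 h4
    have h5 := hD.two e h3 h2.ge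
    have h6 := dist_triangle z' e c
    rw [dist_comm e c] at h6
    simp only [gprod] at h4 h5 ⊢
    linarith
  obtain ⟨U, hU, huU, hU'⟩ := exists_open_gprod hζ u K
  obtain ⟨V, hV, hvV, hV'⟩ := exists_open_gprod hζ v K
  refine ⟨U ×ˢ U, V ×ˢ V, hU.prod hU, hV.prod hV, ⟨huU, huU⟩, ⟨hvV, hvV⟩, ?_⟩
  rintro ⟨a₁, a₂⟩ ⟨b₁, b₂⟩ ha hb -
  obtain ⟨x, A₁, A₂, hA₁, hA₂, haA₁, haA₂, hx⟩ := exists_pair_center hgeo hhyp hD hζ ha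
  obtain ⟨y, B₁, B₂, hB₁, hB₂, hbB₁, hbB₂, hy⟩ := exists_pair_center hgeo hhyp hD hζ hb
  refine ⟨A₁ ×ˢ A₂, B₁ ×ˢ B₂, hA₁.prod hA₂, hB₁.prod hB₂, ⟨haA₁, haA₂⟩, ⟨hbB₁, hbB₂⟩, ?_⟩
  have hiso : ∀ (g : G) (w s t : S), gprod (act g w) (act g s) (act g t) = gprod w s t := by
    intro g w s t; simp only [gprod, (hact.2 g).dist_eq]
  have hnear : ∀ (g : G) (w : S) (z : GBoundary S e) (zs : ℕ → S) (W E₁ E₂ : Set (GBoundary S e)),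
      TendstoBd e zs z → (∀ i, M ≤ i → ∀ j, M ≤ j → K ≤ gprod e (zs i) (zs j)) →
      (∀ z' ∈ W, (K : EReal) < gprodBB e z z') →
      (∀ p' ∈ E₁, ∀ q' ∈ E₂, ∀ s t : ℕ → S, TendstoBd e s p' → TendstoBd e t q' →
        ∃ N, ∀ n, N ≤ n → gprod w (s n) (t n) ≤ 2 * D + 1) →
      (pairMap (bdMap e (act g) (hact.2 g)) '' (E₁ ×ˢ E₂) ∩ W ×ˢ W).Nonempty →
      r ≤ gprod e (act g w) (zs M) := by
    rintro g w z zs W E₁ E₂ hzs hzM hW hE ⟨_, ⟨⟨p, q⟩, ⟨hp, hq⟩, rfl⟩, hpW, hqW⟩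
    obtain ⟨s, hs⟩ := exists_tendstoBd p
    obtain ⟨t, ht⟩ := exists_tendstoBd q
    have := near_of_pair hD (hW _ hpW) (hW _ hqW) hzs (hs.bdMap (hact.2 g)) (ht.bdMap (hact.2 g))
      hzM (w := act g w) (C := 2 * D + 1) (by linarith)
      (by simpa only [hiso] using hE p hp q hq s t hs ht)
    linarith
  refine (finite_passing hgeo hhyp hact hC' (fun x y h => (hR x y h).1) hcc x y).subset ?_
  rintro g ⟨hgA, hgB⟩
  have n1 := hnear g x u us U A₁ A₂ hus huM hU' hx hgA
  have n2 := hnear g y v vs V B₁ B₂ hvs hvM hV' hy hgB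
  have n3 := hsep (act g x) (act g y) (by rwa [gprod_comm]) (by rwa [gprod_comm])
  refine ⟨hpass _ _ _ _ hc₁ hc₁' n1 n3, ?_⟩
  rw [gprod_comm]
  exact hpass _ _ _ _ hc₂ hc₂' n2 (by rwa [gprod_comm])

end CondC


/-- If `G` acts non-elementarily, acylindrically and isometrically on a
geodesic `δ`-hyperbolic space `S`, then `G` is not virtually cyclic, the Gromov boundary
`∂S` (with the visual topology) is completely Hausdorff with at least 3 points, some
element of `G` has north–south dynamics on `∂S`, and the induced action satisfies (C). -/
theorem statement3 {G S : Type*} [Group G] [MetricSpace S] (δ : ℝ) (hδ : 0 ≤ δ)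
    (hgeo : GeodesicSpace S) (hhyp : DeltaHyperbolic S δ)
    {act : G → S → S} (hact : IsIsometricAction act)
    (hacyl : AcylindricalAction act) (e : S) (hne : NonelemAction act e)
    (ζ : ℝ) (hζ : VisualParam e ζ) :
    ¬ VirtuallyCyclic G ∧
    @CompletelyHausdorff (GBoundary S e) (bdTopology S e ζ) ∧
    (∃ a b c : GBoundary S e, a ≠ b ∧ b ≠ c ∧ a ≠ c) ∧
    (∃ g : G, @NorthSouth G (GBoundary S e) _ (bdTopology S e ζ)
      (fun g => bdMap e (act g) (hact.2 g)) g) ∧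
    @ConditionC G (GBoundary S e) (bdTopology S e ζ)
      (fun g => bdMap e (act g) (hact.2 g)) := by
  have hD := fourPt_of_slim hgeo hhyp
  obtain ⟨x, y, z, hx, hy, hz, hxy, hyz, hxz⟩ := id hne
  obtain ⟨f, κ, b, hf⟩ := exists_loxodromic hact hD hζ hx hy hxy
  obtain ⟨p, hp⟩ := hf.exists_limit hact
  obtain ⟨q, hq⟩ := (hf.inv hact).exists_limit hact
  exact ⟨not_virtuallyCyclic hact hD hζ hne hf, completelyHausdorff_bd hζ,
    ⟨x, y, z, hxy, hyz, hxz⟩, ⟨f, q, p, hf.northSouthAt hact hD hζ hq hp⟩,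
    conditionC_bd hgeo hhyp hδ hD hact hacyl hζ⟩
end

section
/- Every convergence action of an infinite group G on an infinite compact metrizable topological space M satisfies condition (C). -/
/-- The space of distinct triples of points of `M`. -/
abbrev Theta3 (M : Type*) := {p : M × M × M // p.1 ≠ p.2.1 ∧ p.2.1 ≠ p.2.2 ∧ p.1 ≠ p.2.2}

/-- The diagonal action of `G` on the space of distinct triples. -/
def theta3Map {G M : Type*} [Group G] {act : G → M → M} (hact : IsAction act) (g : G)
    (p : Theta3 M) : Theta3 M :=
  ⟨(act g p.1.1, act g p.1.2.1, act g p.1.2.2),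
    fun h => p.2.1 (hact.injective g h),
    fun h => p.2.2.1 (hact.injective g h),
    fun h => p.2.2.2 (hact.injective g h)⟩

/-- A convergence action: the diagonal action on the space of distinct triples is
properly discontinuous. -/
def ConvergenceAction {G M : Type*} [Group G] [TopologicalSpace M] {act : G → M → M}
    (hact : IsAction act) : Prop :=
  ∀ K : Set (Theta3 M), IsCompact K → {g : G | (theta3Map hact g '' K ∩ K).Nonempty}.Finite

/-- An elementary action: `G` preserves setwise a nonempty subset of `M` with at most
two elements. -/
def ElementaryAction {G M : Type*} [Group G] (act : G → M → M) : Prop :=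
  ∃ P : Set M, P.Nonempty ∧ P.ncard ≤ 2 ∧ ∀ g : G, act g '' P = P

open Filter Topology

/-- The limit relation of the maps `act g` along a filter `F` on `G`: the points `x` and `y` are
related when every neighbourhood of `(x, y)` eventually meets the graph of `act g`. -/
def LimRel {G M : Type*} [TopologicalSpace M] (act : G → M → M) (F : Filter G) (x y : M) : Prop :=
  ∀ X ∈ 𝓝 x, ∀ Y ∈ 𝓝 y, ∀ᶠ g in F, ∃ z ∈ X, act g z ∈ Y

/-- A total, surjective relation on an infinite set containing a matching of size two but none of
size three is constant off a single point. -/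
theorem exists_cover {M : Type*} [Infinite M] (L : M → M → Prop)
    (htot : ∀ x, ∃ y, L x y) (hsurj : ∀ y, ∃ x, L x y)
    (hno : ∀ x₁ x₂ x₃ y₁ y₂ y₃, x₁ ≠ x₂ → x₂ ≠ x₃ → x₁ ≠ x₃ → y₁ ≠ y₂ → y₂ ≠ y₃ → y₁ ≠ y₃ →
      L x₁ y₁ → L x₂ y₂ → L x₃ y₃ → False)
    {p q p' q' : M} (hpq : p ≠ q) (hpq' : p' ≠ q') (hp : L p p') (hq : L q q') :
    ∃ d c, ∀ x y, L x y → x ≠ d → y = c := by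
  classical
  -- Every `y` other than `p', q'` is related to `p` or `q`; so one of them has infinitely many
  -- partners.
  have hinf : ∃ d, {y | L d y}.Infinite := by
    by_contra! hfin
    have hun : (Set.univ : Set M) ⊆ ({y | L p y} ∪ {y | L q y}) ∪ {p', q'} := by
      intro y _
      obtain ⟨x, hx⟩ := hsurj y
      by_contra hy
      simp only [Set.mem_union, Set.mem_ofPred_eq, Set.mem_insert_iff, Set.mem_singleton_iff,
        not_or] at hy
      obtain ⟨⟨h1, h2⟩, h3, h4⟩ := hy
      exact hno p q x p' q' y hpq (fun h => h2 (h ▸ hx)) (fun h => h1 (h ▸ hx)) hpq'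
        (Ne.symm h4) (Ne.symm h3) hp hq hx
    exact Set.infinite_univ ((((hfin p).union (hfin q)).union (Set.toFinite _)).subset hun)
  obtain ⟨d, hd⟩ := hinf
  have key : ∀ x₁ x₂ y₁ y₂, x₁ ≠ d → x₂ ≠ d → x₁ ≠ x₂ → L x₁ y₁ → L x₂ y₂ → y₁ = y₂ := by
    intro x₁ x₂ y₁ y₂ h1 h2 h12 hL1 hL2
    by_contra hy
    obtain ⟨z, hz, hz'⟩ := hd.exists_notMem_finset {y₁, y₂}
    simp only [Finset.mem_insert, Finset.mem_singleton, not_or] at hz'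
    exact hno x₁ x₂ d y₁ y₂ z h12 h2 h1 hy (Ne.symm hz'.2) (Ne.symm hz'.1) hL1 hL2 hz
  obtain ⟨e, he⟩ := Infinite.exists_notMem_finset ({d} : Finset M)
  obtain ⟨f, hf⟩ := Infinite.exists_notMem_finset ({d, e} : Finset M)
  simp only [Finset.mem_insert, Finset.mem_singleton, not_or] at he hf
  obtain ⟨c, hc⟩ := htot e
  obtain ⟨c', hc'⟩ := htot f
  have hcc : c = c' := key e f c c' he hf.1 (Ne.symm hf.2) hc hc'
  refine ⟨d, c, fun x y hxy hx => ?_⟩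
  by_cases hxe : x = e
  · subst hxe
    rw [hcc]
    exact key x f y c' hx hf.1 (Ne.symm hf.2) hxy hc'
  · exact key x e y c hx he hxe hxy hc

theorem isOpen_theta3 (M : Type*) [TopologicalSpace M] [T2Space M] :
    IsOpen {p : M × M × M | p.1 ≠ p.2.1 ∧ p.2.1 ≠ p.2.2 ∧ p.1 ≠ p.2.2} :=
  (isOpen_ne_fun (by fun_prop) (by fun_prop)).inter
    ((isOpen_ne_fun (by fun_prop) (by fun_prop)).inter
      (isOpen_ne_fun (by fun_prop) (by fun_prop)))

/-- A distinct triple in a compact Hausdorff space has a compact neighbourhood in the space of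
distinct triples containing all triples from some product neighbourhood. -/
theorem exists_compact_box {M : Type*} [TopologicalSpace M] [CompactSpace M] [T2Space M]
    {x₁ x₂ x₃ : M} (h12 : x₁ ≠ x₂) (h23 : x₂ ≠ x₃) (h13 : x₁ ≠ x₃) :
    ∃ K : Set (Theta3 M), IsCompact K ∧ ∃ X₁ ∈ 𝓝 x₁, ∃ X₂ ∈ 𝓝 x₂, ∃ X₃ ∈ 𝓝 x₃,
      ∀ t : Theta3 M, t.1.1 ∈ X₁ → t.1.2.1 ∈ X₂ → t.1.2.2 ∈ X₃ → t ∈ K := by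
  have : LocallyCompactSpace (Theta3 M) := (isOpen_theta3 M).locallyCompactSpace
  obtain ⟨K, hK, hKn⟩ := exists_compact_mem_nhds (⟨(x₁, x₂, x₃), h12, h23, h13⟩ : Theta3 M)
  have h := (isOpen_theta3 M).isOpenEmbedding_subtypeVal.image_mem_nhds.2 hKn
  obtain ⟨X₁, h1, Y, hY, hXY⟩ := mem_nhds_prod_iff.1 h
  obtain ⟨X₂, h2, X₃, h3, hX⟩ := mem_nhds_prod_iff.1 hY
  refine ⟨K, hK, X₁, h1, X₂, h2, X₃, h3, fun t ht1 ht2 ht3 => ?_⟩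
  obtain ⟨s, hs, hst⟩ := hXY (Set.mk_mem_prod ht1 (hX (Set.mk_mem_prod ht2 ht3)) : t.1 ∈ X₁ ×ˢ Y)
  exact Subtype.ext hst ▸ hs

/-- Proper discontinuity on distinct triples forbids matchings of size three in the limit
relation along a filter that avoids finite sets. -/
theorem limRel_no_three {G M : Type*} [Group G] [TopologicalSpace M] [CompactSpace M] [T2Space M]
    {act : G → M → M} (hact : IsAction act) (hconv : ConvergenceAction hact)
    {F : Filter G} [F.NeBot] (hF : F ≤ cofinite) (x₁ x₂ x₃ y₁ y₂ y₃ : M)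
    (hx12 : x₁ ≠ x₂) (hx23 : x₂ ≠ x₃) (hx13 : x₁ ≠ x₃)
    (hy12 : y₁ ≠ y₂) (hy23 : y₂ ≠ y₃) (hy13 : y₁ ≠ y₃)
    (h1 : LimRel act F x₁ y₁) (h2 : LimRel act F x₂ y₂) (h3 : LimRel act F x₃ y₃) : False := by
  obtain ⟨K, hK, X₁, hX1, X₂, hX2, X₃, hX3, hKX⟩ := exists_compact_box hx12 hx23 hx13
  obtain ⟨K', hK', Y₁, hY1, Y₂, hY2, Y₃, hY3, hKY⟩ := exists_compact_box hy12 hy23 hy13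
  obtain ⟨D₁, hD1, E₂, hE2, hDE⟩ : ∃ D₁ ∈ 𝓝 x₁, ∃ E₂ ∈ 𝓝 x₂, Disjoint D₁ E₂ :=
    let ⟨_, h, _, h', h''⟩ := Filter.disjoint_iff.1 (disjoint_nhds_nhds.2 hx12)
    ⟨_, h, _, h', h''⟩
  obtain ⟨D₂, hD2, E₃, hE3, hDE'⟩ : ∃ D₁ ∈ 𝓝 x₂, ∃ E₂ ∈ 𝓝 x₃, Disjoint D₁ E₂ :=
    let ⟨_, h, _, h', h''⟩ := Filter.disjoint_iff.1 (disjoint_nhds_nhds.2 hx23)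
    ⟨_, h, _, h', h''⟩
  obtain ⟨C₁, hC1, C₃, hC3, hC⟩ : ∃ D₁ ∈ 𝓝 x₁, ∃ E₂ ∈ 𝓝 x₃, Disjoint D₁ E₂ :=
    let ⟨_, h, _, h', h''⟩ := Filter.disjoint_iff.1 (disjoint_nhds_nhds.2 hx13)
    ⟨_, h, _, h', h''⟩
  have hev : ∀ᶠ g in F, g ∉ {g : G | (theta3Map hact g '' (K ∪ K') ∩ (K ∪ K')).Nonempty} :=
    hF (hconv _ (hK.union hK')).compl_mem_cofinite
  obtain ⟨g, ⟨z₁, hz1, hg1⟩, ⟨z₂, hz2, hg2⟩, ⟨z₃, hz3, hg3⟩, hg⟩ :=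
    ((h1 _ (inter_mem hX1 (inter_mem hD1 hC1)) _ hY1).and
      ((h2 _ (inter_mem hX2 (inter_mem hE2 hD2)) _ hY2).and
      ((h3 _ (inter_mem hX3 (inter_mem hE3 hC3)) _ hY3).and hev))).exists
  let t : Theta3 M := ⟨(z₁, z₂, z₃), hDE.ne_of_mem hz1.2.1 hz2.2.1,
    hDE'.ne_of_mem hz2.2.2 hz3.2.1, hC.ne_of_mem hz1.2.2 hz3.2.2⟩
  exact hg ⟨theta3Map hact g t, ⟨t, Or.inl (hKX t hz1.1 hz2.1 hz3.1), rfl⟩,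
    Or.inr (hKY (theta3Map hact g t) hg1 hg2 hg3)⟩

/-- Along an ultrafilter `W` in an auxiliary type `T` mapping to `G`, a moving point `f` tending to
`x` is carried to a moving point with a limit `y`, related to `x` by the limit relation. -/
theorem exists_limRel {G M T : Type*} [TopologicalSpace M] [CompactSpace M]
    (act : G → M → M) (W : Ultrafilter T) (γ : T → G) (f : T → M) {x : M}
    (hf : Tendsto f W (𝓝 x)) :
    ∃ y, Tendsto (fun t => act (γ t) (f t)) W (𝓝 y) ∧ LimRel act (Filter.map γ W) x y := by
  obtain ⟨y, -, hy⟩ := isCompact_univ.ultrafilter_le_nhds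
    (W.map (fun t => act (γ t) (f t))) (by simp)
  have hy' : Tendsto (fun t => act (γ t) (f t)) W (𝓝 y) := hy
  refine ⟨y, hy', fun X hX Y hY => ?_⟩
  rw [eventually_map]
  filter_upwards [hf hX, hy' hY] with t h1 h2 using ⟨f t, h1, h2⟩

theorem exists_limRel_left {G M T : Type*} [Group G] [TopologicalSpace M] [CompactSpace M]
    {act : G → M → M} (hact : IsAction act) (W : Ultrafilter T) (γ : T → G) (y : M) :
    ∃ x, LimRel act (Filter.map γ W) x y := by
  obtain ⟨x, -, hx⟩ := isCompact_univ.ultrafilter_le_nhds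
    (W.map (fun t => act (γ t)⁻¹ y)) (by simp)
  have hx' : Tendsto (fun t => act (γ t)⁻¹ y) W (𝓝 x) := hx
  refine ⟨x, fun X hX Y hY => ?_⟩
  rw [eventually_map]
  filter_upwards [hx' hX] with t ht
  refine ⟨_, ht, ?_⟩
  rw [← hact.2, mul_inv_cancel, hact.1]
  exact mem_of_mem_nhds hY

/-- Every convergence action of an infinite group on an infinite
compact metrizable space satisfies condition (C). -/
theorem statement6 {G M : Type*} [Group G] [Infinite G] [TopologicalSpace M]
    [CompactSpace M] [TopologicalSpace.MetrizableSpace M] [Infinite M]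
    {act : G → M → M} (hact : IsActionByHomeos act)
    (hconv : ConvergenceAction hact.1) :
    ConditionC act := by
  have hM : T25Space M := inferInstance
  rintro ⟨x, x'⟩ ⟨y, y'⟩ hx hy huv
  obtain rfl : x = x' := hx
  obtain rfl : y = y' := hy
  have hxy : x ≠ y := fun h => huv (by rw [h])
  obtain ⟨U, hxU, hU, V, hyV, hV, hUV⟩ := exists_open_nhds_disjoint_closure hxy
  refine ⟨U ×ˢ U, V ×ˢ V, hU.prod hU, hV.prod hV, ⟨hxU, hxU⟩, ⟨hyV, hyV⟩, ?_⟩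
  intro a b ha hb _
  by_contra! hcon
  let S : Set (G × (M × M) × (M × M)) :=
    {t | pairMap (act t.1) t.2.1 ∈ U ×ˢ U ∧ pairMap (act t.1) t.2.2 ∈ V ×ˢ V}
  have hne : ((cofinite ×ˢ (𝓝 a ×ˢ 𝓝 b)) ⊓ 𝓟 S).NeBot := by
    rw [← frequently_mem_iff_neBot]
    intro hev
    obtain ⟨E, hE, N, hN, hEN⟩ := mem_prod_iff.1 hev
    obtain ⟨A', hA', B', hB', hAB⟩ := mem_prod_iff.1 hN
    obtain ⟨A, hAA, hA, haA⟩ := mem_nhds_iff.1 hA'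
    obtain ⟨B, hBB, hB, hbB⟩ := mem_nhds_iff.1 hB'
    obtain ⟨g, ⟨⟨_, ⟨p, hp, rfl⟩, hpU⟩, ⟨_, ⟨q, hq, rfl⟩, hqV⟩⟩, hgE⟩ :=
      ((hcon A B hA hB haA hbB).sdiff (mem_cofinite.1 hE)).nonempty
    exact hEN (show ((g, p, q) : G × (M × M) × (M × M)) ∈ E ×ˢ N from
      ⟨not_not.1 hgE, hAB ⟨hAA hp, hBB hq⟩⟩) ⟨hpU, hqV⟩
  let W : Ultrafilter (G × (M × M) × (M × M)) :=
    Ultrafilter.of ((cofinite ×ˢ (𝓝 a ×ˢ 𝓝 b)) ⊓ 𝓟 S)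
  have hW : W.toFilter ≤ (cofinite ×ˢ (𝓝 a ×ˢ 𝓝 b)) ⊓ 𝓟 S := Ultrafilter.of_le _
  have hW1 : Tendsto (fun t : G × (M × M) × (M × M) => t) W (cofinite ×ˢ (𝓝 a ×ˢ 𝓝 b)) :=
    hW.trans inf_le_left
  have hWS : ∀ᶠ t in W.toFilter, t ∈ S := le_principal_iff.1 (hW.trans inf_le_right)
  have hcof : Filter.map Prod.fst W.toFilter ≤ cofinite := hW1.fst
  have hta := hW1.snd.fst
  have htb := hW1.snd.snd
  obtain ⟨p, hp, hLp⟩ := exists_limRel act W Prod.fst (fun t => t.2.1.1) hta.fst_nhds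
  obtain ⟨q, hq, hLq⟩ := exists_limRel act W Prod.fst (fun t => t.2.1.2) hta.snd_nhds
  obtain ⟨r, hr, hLr⟩ := exists_limRel act W Prod.fst (fun t => t.2.2.1) htb.fst_nhds
  obtain ⟨s, hs, hLs⟩ := exists_limRel act W Prod.fst (fun t => t.2.2.2) htb.snd_nhds
  have hpU : p ∈ closure U := mem_closure_of_tendsto hp (hWS.mono fun t ht => ht.1.1)
  have hqU : q ∈ closure U := mem_closure_of_tendsto hq (hWS.mono fun t ht => ht.1.2)
  have hrV : r ∈ closure V := mem_closure_of_tendsto hr (hWS.mono fun t ht => ht.2.1)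
  have hsV : s ∈ closure V := mem_closure_of_tendsto hs (hWS.mono fun t ht => ht.2.2)
  have hcover : ∀ {m n m' n' : M}, m ≠ n → m' ≠ n' →
      LimRel act (Filter.map Prod.fst W.toFilter) m m' →
      LimRel act (Filter.map Prod.fst W.toFilter) n n' →
      ∃ d c, ∀ x y, LimRel act (Filter.map Prod.fst W.toFilter) x y → x ≠ d → y = c :=
    fun hmn hmn' hm hn => exists_cover _
      (fun x => (exists_limRel act W Prod.fst (fun _ => x) tendsto_const_nhds).imp
        fun _ h => h.2)
      (exists_limRel_left hact.1 W Prod.fst)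
      (limRel_no_three hact.1 hconv hcof) hmn hmn' hm hn
  -- The first coordinate of `b` differs from one of the two coordinates of `a`.
  obtain ⟨d, c, hdc⟩ :
      ∃ d c, ∀ x y, LimRel act (Filter.map Prod.fst W.toFilter) x y → x ≠ d → y = c := by
    by_cases h : a.1 = b.1
    · exact hcover (fun h' => ha (h.trans h'.symm)) (hUV.ne_of_mem hqU hrV) hLq hLr
    · exact hcover h (hUV.ne_of_mem hpU hrV) hLp hLr
  have hcU : c ∈ closure U := by
    by_cases h : a.1 = d
    · exact hdc _ _ hLq (fun h' => ha (h.trans h'.symm)) ▸ hqU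
    · exact hdc _ _ hLp h ▸ hpU
  have hcV : c ∈ closure V := by
    by_cases h : b.1 = d
    · exact hdc _ _ hLs (fun h' => hb (h.trans h'.symm)) ▸ hsV
    · exact hdc _ _ hLr h ▸ hrV
  exact hUV.ne_of_mem hcU hcV rfl
end

section
/- Let G be a group acting by homeomorphisms on a topological space M and let 𝒜 be a symmetric, G-invariant annulus system on M satisfying axioms (A1) and (A2). Then the function ρ on Θ₃(M) defined from the crossratio associated with 𝒜 takes only finite values and is a hyperbolic, G-invariant path quasimetric on Θ₃(M). -/
/-- An `r`-quasimetric on a set `Q`. -/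
def IsQuasimetric {Q : Type*} (r : ℝ) (ρ : Q → Q → ℝ) : Prop :=
  (∀ x y : Q, 0 ≤ ρ x y) ∧ (∀ x : Q, ρ x x = 0) ∧ (∀ x y : Q, ρ x y = ρ y x) ∧
  ∀ x y z : Q, ρ x y ≤ ρ x z + ρ z y + r

/-- A path quasimetric: a quasimetric such that, for some `s ≥ 0`, every pair of points
is connected by an `s`-geodesic segment. -/
def IsPathQuasimetric {Q : Type*} (ρ : Q → Q → ℝ) : Prop :=
  (∃ r : ℝ, 0 ≤ r ∧ IsQuasimetric r ρ) ∧
  ∃ s : ℝ, 0 ≤ s ∧ ∀ x y : Q, ∃ (n : ℕ) (c : ℕ → Q), c 0 = x ∧ c n = y ∧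
    ∀ i ≤ n, ∀ j ≤ n,
      -s ≤ ρ (c i) (c j) - |(i : ℝ) - (j : ℝ)| ∧ ρ (c i) (c j) - |(i : ℝ) - (j : ℝ)| ≤ s

/-- A hyperbolic quasimetric (four-point condition). -/
def IsHyperbolicQM {Q : Type*} (ρ : Q → Q → ℝ) : Prop :=
  ∃ k : ℝ, 0 ≤ k ∧ ∀ x y z w : Q,
    ρ x y + ρ z w ≤ max (ρ x z + ρ y w) (ρ x w + ρ y z) + k

/-- An annulus on `M`: an ordered pair of disjoint closed sets not covering `M`. -/
def IsAnnulus {M : Type*} [TopologicalSpace M] (A : Set M × Set M) : Prop :=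
  IsClosed A.1 ∧ IsClosed A.2 ∧ A.1 ∩ A.2 = ∅ ∧ A.1 ∪ A.2 ≠ Set.univ

/-- `K < A`. -/
def setLtAnn {M : Type*} [TopologicalSpace M] (K : Set M) (A : Set M × Set M) : Prop :=
  K ⊆ interior A.1

/-- `A < K`. -/
def annLtSet {M : Type*} [TopologicalSpace M] (A : Set M × Set M) (K : Set M) : Prop :=
  K ⊆ interior A.2

/-- `A < B` for annuli. -/
def annLtAnn {M : Type*} [TopologicalSpace M] (A B : Set M × Set M) : Prop :=
  interior A.2 ∪ interior B.1 = Set.univ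

/-- The crossratio `(K|L)` associated with an annulus system `𝒜`: the maximal number of
annuli of `𝒜` nested between `K` and `L`. -/
noncomputable def crossratio {M : Type*} [TopologicalSpace M] (𝒜 : Set (Set M × Set M))
    (K L : Set M) : ℕ∞ :=
  sSup {n : ℕ∞ | n = 0 ∨ ∃ m : ℕ, n = (m : ℕ∞) ∧ 0 < m ∧
    ∃ A : ℕ → Set M × Set M, (∀ i < m, A i ∈ 𝒜) ∧ setLtAnn K (A 0) ∧
      (∀ i, i + 1 < m → annLtAnn (A i) (A (i + 1))) ∧ annLtSet (A (m - 1)) L}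

/-- The components of a distinct triple. -/
def t3c {M : Type*} (x : Theta3 M) : Fin 3 → M := ![x.1.1, x.1.2.1, x.1.2.2]

/-- The function `ρ` on distinct triples defined from the crossratio:
`ρ(x,y) = max (x_i,x_j|y_k,y_l)` over `i ≠ j`, `k ≠ l`. -/
noncomputable def theta3rho {M : Type*} [TopologicalSpace M] (𝒜 : Set (Set M × Set M))
    (x y : Theta3 M) : ℕ∞ :=
  sSup {n : ℕ∞ | ∃ i j k l : Fin 3, i ≠ j ∧ k ≠ l ∧
    n = crossratio 𝒜 {t3c x i, t3c x j} {t3c y k, t3c y l}}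

namespace AnnulusSystem

variable {M : Type*} [TopologicalSpace M] {𝒜 : Set (Set M × Set M)}

/-- The first `n` terms of `A` are annuli of `𝒜` with `A i < A j` for all `i < j`. -/
def Chain (𝒜 : Set (Set M × Set M)) (n : ℕ) (A : ℕ → Set M × Set M) : Prop :=
  (∀ i < n, A i ∈ 𝒜) ∧ ∀ i j, i < j → j < n → annLtAnn (A i) (A j)

/-- At least two of the points of the triple `x` lie in the open set `interior S`. -/
def Majority (x : Theta3 M) (S : Set M) : Prop :=
  ∃ i j : Fin 3, i ≠ j ∧ t3c x i ∈ interior S ∧ t3c x j ∈ interior S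

/-- There is a chain of length `n` such that each triple of `K` lies, by majority, on the minus
side of all its annuli, and each triple of `L` on the plus side. -/
def Sep (𝒜 : Set (Set M × Set M)) (K L : Set (Theta3 M)) (n : ℕ) : Prop :=
  ∃ A, Chain 𝒜 n A ∧ ∀ i < n, (∀ x ∈ K, Majority x (A i).1) ∧ ∀ y ∈ L, Majority y (A i).2

/-- The crossratio of two sets of triples: the maximal length of a chain separating them.
It is meaningful when the lengths are bounded, which `Hyp` guarantees for nonempty sets. -/
noncomputable def tcr (𝒜 : Set (Set M × Set M)) (K L : Set (Theta3 M)) : ℕ :=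
  sSup {n | Sep 𝒜 K L n}

/-- The properties of a symmetric annulus system satisfying both axioms which are used to study
`ρ`. The two axioms are phrased in terms of `Sep` and of chains rather than crossratios. -/
structure Hyp (𝒜 : Set (Set M × Set M)) (k : ℕ) : Prop where
  disj : ∀ A ∈ 𝒜, A.1 ∩ A.2 = ∅
  gap : ∀ A ∈ 𝒜, ∃ u, u ∉ A.1 ∧ u ∉ A.2
  sym : ∀ A ∈ 𝒜, (A.2, A.1) ∈ 𝒜
  bdd : ∀ x y : Theta3 M, BddAbove {n | Sep 𝒜 {x} {y} n}
  cross : ∀ (x y z w : M) (A B : ℕ → Set M × Set M), Chain 𝒜 (k + 1) A → Chain 𝒜 (k + 1) B →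
    (∀ i < k + 1, x ∈ interior (A i).1 ∧ y ∈ interior (A i).1 ∧
      z ∈ interior (A i).2 ∧ w ∈ interior (A i).2) →
    (∀ i < k + 1, x ∈ interior (B i).1 ∧ z ∈ interior (B i).1 ∧
      y ∈ interior (B i).2 ∧ w ∈ interior (B i).2) → False

/-! ### Chains of annuli and crossratios -/

theorem not_mem_plus {A : Set M × Set M} (hd : A.1 ∩ A.2 = ∅) {v : M}
    (hv : v ∈ interior A.1) : v ∉ interior A.2 := fun h =>
  (Set.mem_empty_iff_false v).1 (hd ▸ ⟨interior_subset hv, interior_subset h⟩)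

theorem ann_cases {A B : Set M × Set M} (h : annLtAnn A B) (v : M) :
    v ∈ interior A.2 ∨ v ∈ interior B.1 := by
  have : v ∈ interior A.2 ∪ interior B.1 := by
    rw [show interior A.2 ∪ interior B.1 = Set.univ from h]; trivial
  exact this

theorem ann_trans {A B C : Set M × Set M} (hd : B.1 ∩ B.2 = ∅)
    (h1 : annLtAnn A B) (h2 : annLtAnn B C) : annLtAnn A C := by
  refine Set.eq_univ_of_forall fun v => ?_
  rcases ann_cases h1 v with h | h
  · exact Or.inl h
  · rcases ann_cases h2 v with h' | h'
    · exact absurd h' (not_mem_plus hd h)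
    · exact Or.inr h'

theorem chain_of_succ (hd : ∀ A ∈ 𝒜, A.1 ∩ A.2 = ∅) {n : ℕ} {A : ℕ → Set M × Set M}
    (hA : ∀ i < n, A i ∈ 𝒜) (hs : ∀ i, i + 1 < n → annLtAnn (A i) (A (i + 1))) :
    Chain 𝒜 n A := by
  refine ⟨hA, fun i j hij => ?_⟩
  induction j, hij using Nat.le_induction with
  | base => exact fun h => hs i h
  | succ j hij ih =>
    exact fun h => ann_trans (hd _ (hA j (by omega))) (ih (by omega)) (hs j h)

theorem mem_minus_of_le (hd : ∀ A ∈ 𝒜, A.1 ∩ A.2 = ∅) {n : ℕ} {A : ℕ → Set M × Set M}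
    (hA : Chain 𝒜 n A) {i j : ℕ} (hij : i ≤ j) (hj : j < n) {v : M}
    (hv : v ∈ interior (A i).1) : v ∈ interior (A j).1 := by
  rcases hij.eq_or_lt with rfl | hij
  · exact hv
  · exact (ann_cases (hA.2 i j hij hj) v).resolve_left
      (not_mem_plus (hd _ (hA.1 i (by omega))) hv)

theorem mem_plus_of_le (hd : ∀ A ∈ 𝒜, A.1 ∩ A.2 = ∅) {n : ℕ} {A : ℕ → Set M × Set M}
    (hA : Chain 𝒜 n A) {i j : ℕ} (hij : i ≤ j) (hj : j < n) {v : M}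
    (hv : v ∈ interior (A j).2) : v ∈ interior (A i).2 := by
  rcases hij.eq_or_lt with rfl | hij
  · exact hv
  · exact (ann_cases (hA.2 i j hij hj) v).resolve_right
      fun h => not_mem_plus (hd _ (hA.1 j hj)) h hv

theorem Chain.sub {n m p : ℕ} {A : ℕ → Set M × Set M} (hA : Chain 𝒜 n A) (h : p + m ≤ n) :
    Chain 𝒜 m (fun i => A (p + i)) :=
  ⟨fun i hi => hA.1 _ (by omega), fun i j hij hj => hA.2 _ _ (by omega) (by omega)⟩

theorem le_crossratio_iff (hd : ∀ A ∈ 𝒜, A.1 ∩ A.2 = ∅) (K L : Set M) (n : ℕ) :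
    (n : ℕ∞) ≤ crossratio 𝒜 K L ↔
      ∃ A, Chain 𝒜 n A ∧ ∀ i < n, K ⊆ interior (A i).1 ∧ L ⊆ interior (A i).2 := by
  constructor
  · intro h
    rcases Nat.eq_zero_or_pos n with rfl | hn
    · exact ⟨fun _ => (∅, ∅), ⟨by simp, by simp⟩, by simp⟩
    have h1 : ((n - 1 : ℕ) : ℕ∞) < crossratio 𝒜 K L :=
      lt_of_lt_of_le (by exact_mod_cast Nat.sub_lt hn one_pos) h
    obtain ⟨s, hs, hlt⟩ := lt_sSup_iff.1 h1
    rcases hs with rfl | ⟨m, rfl, hm, A, hA, hK, hs, hL⟩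
    · simp at hlt
    have hnm : n - 1 < m := by exact_mod_cast hlt
    have hc := chain_of_succ hd hA hs
    have hc' : Chain 𝒜 n A := by simpa using hc.sub (p := 0) (m := n) (by omega)
    exact ⟨A, hc', fun i hi => ⟨fun v hv => mem_minus_of_le hd hc (Nat.zero_le i) (by omega) (hK hv),
      fun v hv => mem_plus_of_le hd hc (show i ≤ m - 1 by omega) (by omega) (hL hv)⟩⟩
  · rintro ⟨A, hA, h⟩
    rcases Nat.eq_zero_or_pos n with rfl | hn
    · simp
    exact le_sSup (Or.inr ⟨n, rfl, hn, A, hA.1, (h 0 hn).1,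
      fun i hi => hA.2 _ _ (by omega) hi, (h (n - 1) (by omega)).2⟩)

/-! ### Triples and majorities -/

theorem t3c_injective {M : Type*} (x : Theta3 M) : Function.Injective (t3c x) := by
  obtain ⟨⟨a, b, c⟩, h1, h2, h3⟩ := x
  intro i j h
  have := h1.symm
  have := h2.symm
  have := h3.symm
  fin_cases i <;> fin_cases j <;> simp_all [t3c]

/-- Two majorities among three indices have an index in common. -/
theorem exists_common {I J : Fin 3 → Prop}
    (hI : ∃ i j, i ≠ j ∧ I i ∧ I j) (hJ : ∃ i j, i ≠ j ∧ J i ∧ J j) : ∃ i, I i ∧ J i := by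
  obtain ⟨i, j, hij, hi, hj⟩ := hI
  obtain ⟨i', j', hij', hi', hj'⟩ := hJ
  by_cases h1 : i = i'
  · exact ⟨i, hi, h1 ▸ hi'⟩
  by_cases h2 : i = j'
  · exact ⟨i, hi, h2 ▸ hj'⟩
  by_cases h3 : j = i'
  · exact ⟨j, hj, h3 ▸ hi'⟩
  exact ⟨j, hj, (show j = j' by omega) ▸ hj'⟩

theorem majority_disjoint {A : Set M × Set M} (hd : A.1 ∩ A.2 = ∅) {x : Theta3 M}
    (h1 : Majority x A.1) (h2 : Majority x A.2) : False := by
  obtain ⟨i, hi₁, hi₂⟩ := exists_common h1 h2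
  exact not_mem_plus hd hi₁ hi₂

/-- If `A < B`, every triple is on the plus side of `A` or on the minus side of `B`: the relation
between annuli on `M` is inherited by the two sides in the space of triples. -/
theorem majority_cases {A B : Set M × Set M} (h : annLtAnn A B) (x : Theta3 M) :
    Majority x A.2 ∨ Majority x B.1 := by
  have h0 := ann_cases h (t3c x 0)
  have h1 := ann_cases h (t3c x 1)
  have h2 := ann_cases h (t3c x 2)
  have h01 : (0 : Fin 3) ≠ 1 := by decide
  have h02 : (0 : Fin 3) ≠ 2 := by decide
  have h12 : (1 : Fin 3) ≠ 2 := by decide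
  rcases h0 with h0 | h0 <;> rcases h1 with h1 | h1 <;> rcases h2 with h2 | h2
  · exact Or.inl ⟨0, 1, h01, h0, h1⟩
  · exact Or.inl ⟨0, 1, h01, h0, h1⟩
  · exact Or.inl ⟨0, 2, h02, h0, h2⟩
  · exact Or.inr ⟨1, 2, h12, h1, h2⟩
  · exact Or.inl ⟨1, 2, h12, h1, h2⟩
  · exact Or.inr ⟨0, 2, h02, h0, h2⟩
  · exact Or.inr ⟨0, 1, h01, h0, h1⟩
  · exact Or.inr ⟨0, 1, h01, h0, h1⟩

/-- Along a chain, the same two points witness all the minus majorities. -/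
theorem minus_uniform (hd : ∀ A ∈ 𝒜, A.1 ∩ A.2 = ∅) {n : ℕ} {A : ℕ → Set M × Set M}
    (hA : Chain 𝒜 n A) {x : Theta3 M} (h : ∀ l < n, Majority x (A l).1) :
    ∃ i j : Fin 3, i ≠ j ∧ (∀ l < n, t3c x i ∈ interior (A l).1) ∧
      ∀ l < n, t3c x j ∈ interior (A l).1 := by
  rcases Nat.eq_zero_or_pos n with rfl | hn
  · exact ⟨0, 1, by decide, by simp, by simp⟩
  obtain ⟨i, j, hij, hi, hj⟩ := h 0 hn
  exact ⟨i, j, hij, fun l hl => mem_minus_of_le hd hA (Nat.zero_le l) hl hi,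
    fun l hl => mem_minus_of_le hd hA (Nat.zero_le l) hl hj⟩

theorem plus_uniform (hd : ∀ A ∈ 𝒜, A.1 ∩ A.2 = ∅) {n : ℕ} {A : ℕ → Set M × Set M}
    (hA : Chain 𝒜 n A) {x : Theta3 M} (h : ∀ l < n, Majority x (A l).2) :
    ∃ i j : Fin 3, i ≠ j ∧ (∀ l < n, t3c x i ∈ interior (A l).2) ∧
      ∀ l < n, t3c x j ∈ interior (A l).2 := by
  rcases Nat.eq_zero_or_pos n with rfl | hn
  · exact ⟨0, 1, by decide, by simp, by simp⟩
  obtain ⟨i, j, hij, hi, hj⟩ := h (n - 1) (by omega)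
  exact ⟨i, j, hij,
    fun l hl => mem_plus_of_le hd hA (show l ≤ n - 1 by omega) (by omega) hi,
    fun l hl => mem_plus_of_le hd hA (show l ≤ n - 1 by omega) (by omega) hj⟩

theorem le_rho_iff (hd : ∀ A ∈ 𝒜, A.1 ∩ A.2 = ∅) (x y : Theta3 M) (n : ℕ) :
    (n : ℕ∞) ≤ theta3rho 𝒜 x y ↔ Sep 𝒜 {x} {y} n := by
  constructor
  · intro h
    rcases Nat.eq_zero_or_pos n with rfl | hn
    · exact ⟨fun _ => (∅, ∅), ⟨by simp, by simp⟩, by simp⟩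
    have h1 : ((n - 1 : ℕ) : ℕ∞) < theta3rho 𝒜 x y :=
      lt_of_lt_of_le (by exact_mod_cast Nat.sub_lt hn one_pos) h
    obtain ⟨s, ⟨i, j, k, l, hij, hkl, rfl⟩, hlt⟩ := lt_sSup_iff.1 h1
    have h2 : (n : ℕ∞) ≤ crossratio 𝒜 {t3c x i, t3c x j} {t3c y k, t3c y l} := by
      have := Order.add_one_le_of_lt hlt
      rwa [show ((n - 1 : ℕ) : ℕ∞) + 1 = ((n - 1 + 1 : ℕ) : ℕ∞) from rfl,
        Nat.sub_add_cancel hn] at this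
    obtain ⟨A, hA, hs⟩ := (le_crossratio_iff hd _ _ n).1 h2
    refine ⟨A, hA, fun m hm => ⟨?_, ?_⟩⟩
    · rintro _ rfl
      exact ⟨i, j, hij, (hs m hm).1 (by simp), (hs m hm).1 (by simp)⟩
    · rintro _ rfl
      exact ⟨k, l, hkl, (hs m hm).2 (by simp), (hs m hm).2 (by simp)⟩
  · rintro ⟨A, hA, hs⟩
    obtain ⟨i, j, hij, hi, hj⟩ := minus_uniform hd hA fun l hl => (hs l hl).1 x rfl
    obtain ⟨k, l, hkl, hk, hl⟩ := plus_uniform hd hA fun l hl => (hs l hl).2 y rfl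
    refine le_trans ((le_crossratio_iff hd _ _ n).2 ⟨A, hA, fun m hm => ⟨?_, ?_⟩⟩)
      (le_sSup ⟨i, j, k, l, hij, hkl, rfl⟩)
    · rintro v (rfl | rfl)
      exacts [hi m hm, hj m hm]
    · rintro v (rfl | rfl)
      exacts [hk m hm, hl m hm]

/-! ### Separation of sets of triples -/

theorem Sep.zero (K L : Set (Theta3 M)) : Sep 𝒜 K L 0 :=
  ⟨fun _ => (∅, ∅), ⟨by simp, by simp⟩, by simp⟩

theorem Sep.mono {K L K' L' : Set (Theta3 M)} {n m : ℕ} (h : Sep 𝒜 K' L' n)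
    (hK : K ⊆ K') (hL : L ⊆ L') (hm : m ≤ n) : Sep 𝒜 K L m := by
  obtain ⟨A, hA, hs⟩ := h
  exact ⟨A, ⟨fun i hi => hA.1 i (by omega), fun i j hij hj => hA.2 i j hij (by omega)⟩,
    fun i hi => ⟨fun x hx => (hs i (by omega)).1 x (hK hx),
      fun y hy => (hs i (by omega)).2 y (hL hy)⟩⟩

variable {k : ℕ}

theorem Sep.symm (H : Hyp 𝒜 k) {K L : Set (Theta3 M)} {n : ℕ} (h : Sep 𝒜 K L n) :
    Sep 𝒜 L K n := by
  obtain ⟨A, hA, hs⟩ := h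
  refine ⟨fun i => ((A (n - 1 - i)).2, (A (n - 1 - i)).1),
    ⟨fun i hi => H.sym _ (hA.1 _ (by omega)), fun i j hij hj => ?_⟩,
    fun i hi => ⟨(hs (n - 1 - i) (by omega)).2, (hs (n - 1 - i) (by omega)).1⟩⟩
  have := hA.2 (n - 1 - j) (n - 1 - i) (by omega) (by omega)
  simp only [annLtAnn] at this ⊢
  rw [Set.union_comm]
  exact this

/-- A further triple `u` cuts a chain from `K` to `L` into a part having `u` on its plus side and
a part having `u` on its minus side; at most one annulus is lost. -/
theorem Sep.split {K L : Set (Theta3 M)} {n : ℕ} (u : Theta3 M)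
    (h : Sep 𝒜 K L n) :
    ∃ p q, n ≤ p + q + 1 ∧ Sep 𝒜 K (insert u L) p ∧ Sep 𝒜 (insert u K) L q := by
  obtain ⟨A, hA, hs⟩ := h
  by_cases hall : ∀ i < n, Majority u (A i).1
  · refine ⟨0, n, by omega, Sep.zero _ _, A, hA, fun i hi => ⟨?_, (hs i hi).2⟩⟩
    rintro x (rfl | hx)
    exacts [hall i hi, (hs i hi).1 x hx]
  -- the last annulus which does not have `u` on its minus side
  have hex : ∃ p, p < n ∧ ¬ Majority u (A p).1 ∧ ∀ j, p < j → j < n → Majority u (A j).1 := by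
    classical
    push Not at hall
    obtain ⟨i, hi, hni⟩ := hall
    obtain ⟨hp, hp'⟩ := Nat.findGreatest_spec
      (P := fun i => i < n ∧ ¬ Majority u (A i).1) hi.le ⟨hi, hni⟩
    refine ⟨_, hp, hp', fun j hj hjn => ?_⟩
    by_contra hc
    exact Nat.findGreatest_is_greatest hj hjn.le ⟨hjn, hc⟩
  obtain ⟨p, hp, hnp, hpj⟩ := hex
  refine ⟨p, n - (p + 1), by omega, ⟨A, by simpa using hA.sub (p := 0) (m := p) (by omega),
    fun i hi => ⟨(hs i (by omega)).1, ?_⟩⟩,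
    ⟨fun i => A (p + 1 + i), hA.sub (by omega), fun i hi => ⟨?_, (hs _ (by omega)).2⟩⟩⟩
  · rintro x (rfl | hx)
    · exact (majority_cases (hA.2 i p hi hp) x).resolve_right hnp
    · exact (hs i (by omega)).2 x hx
  · rintro x (rfl | hx)
    · exact hpj _ (by omega) (by omega)
    · exact (hs _ (by omega)).1 x hx

/-- Two chains meeting at a triple `u` can be concatenated after dropping `k + 1` annuli from
each on the side of `u`: a point preventing this would cross both dropped parts, against (A2). -/
theorem Sep.concat (H : Hyp 𝒜 k) {K L : Set (Theta3 M)} {a b : ℕ} {u : Theta3 M}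
    (hK : K.Nonempty) (hL : L.Nonempty)
    (h1 : Sep 𝒜 K (insert u L) a) (h2 : Sep 𝒜 (insert u K) L b) :
    Sep 𝒜 K L (a + b - 2 * (k + 1)) := by
  by_cases ha : a ≤ k + 1
  · exact h2.mono (Set.subset_insert _ _) le_rfl (by omega)
  by_cases hb : b ≤ k + 1
  · exact h1.mono le_rfl (Set.subset_insert _ _) (by omega)
  obtain ⟨a, rfl⟩ : ∃ a', a = a' + (k + 1) := ⟨a - (k + 1), by omega⟩
  obtain ⟨b, rfl⟩ : ∃ b', b = (k + 1) + b' := ⟨b - (k + 1), by omega⟩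
  obtain ⟨A, hA, hAs⟩ := h1
  obtain ⟨B, hB, hBs⟩ := h2
  have hn : a + (k + 1) + (k + 1 + b) - 2 * (k + 1) = a + b := by omega
  rw [hn]
  have key : ∀ i < a, ∀ j, k + 1 ≤ j → j < k + 1 + b → annLtAnn (A i) (B j) := by
    intro i hi j hj hjb
    by_contra hc
    obtain ⟨v, hv⟩ := (Set.ne_univ_iff_exists_notMem _).1 hc
    rw [Set.mem_union, not_or] at hv
    obtain ⟨p, hp⟩ := hK
    obtain ⟨q, hq⟩ := hL
    have hA' := hA.sub (p := a) (m := k + 1) (by omega)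
    have hB' := hB.sub (p := 0) (m := k + 1) (by omega)
    obtain ⟨p₀, hpA, hpB⟩ := exists_common
      (minus_uniform H.disj hA' fun l hl => (hAs (a + l) (by omega)).1 p hp)
      (minus_uniform H.disj hB' fun l hl => (hBs (0 + l) (by omega)).1 p (Or.inr hp))
    obtain ⟨u₀, huA, huB⟩ := exists_common
      (plus_uniform H.disj hA' fun l hl => (hAs (a + l) (by omega)).2 u (Or.inl rfl))
      (minus_uniform H.disj hB' fun l hl => (hBs (0 + l) (by omega)).1 u (Or.inl rfl))
    obtain ⟨q₀, hqA, hqB⟩ := exists_common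
      (plus_uniform H.disj hA' fun l hl => (hAs (a + l) (by omega)).2 q (Or.inr hq))
      (plus_uniform H.disj hB' fun l hl => (hBs (0 + l) (by omega)).2 q hq)
    refine H.cross (t3c p p₀) v (t3c u u₀) (t3c q q₀) _ _ hA' hB'
      (fun l hl => ⟨hpA l hl, ?_, huA l hl, hqA l hl⟩)
      (fun l hl => ⟨hpB l hl, huB l hl, ?_, hqB l hl⟩)
    · exact (ann_cases (hA.2 i (a + l) (by omega) (by omega)) v).resolve_left hv.1
    · exact (ann_cases (hB.2 (0 + l) j (by omega) (by omega)) v).resolve_right hv.2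
  refine ⟨fun i => if i < a then A i else B (k + 1 + (i - a)), ⟨fun i hi => ?_, fun i j hij hj => ?_⟩,
    fun i hi => ?_⟩
  · dsimp only
    split_ifs with h
    · exact hA.1 i (by omega)
    · exact hB.1 _ (by omega)
  · dsimp only
    split_ifs with h h' h'
    · exact hA.2 i j hij (by omega)
    · exact key i h _ (by omega) (by omega)
    · omega
    · exact hB.2 _ _ (by omega) (by omega)
  · dsimp only
    split_ifs with h
    · exact ⟨(hAs i (by omega)).1, fun y hy => (hAs i (by omega)).2 y (Or.inr hy)⟩
    · exact ⟨fun x hx => (hBs _ (by omega)).1 x (Or.inr hx), (hBs _ (by omega)).2⟩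

/-- Axiom (A2) passes from points to triples, with the same constant. -/
theorem Sep.cross (H : Hyp 𝒜 k) {x y z w : Theta3 M}
    (h1 : Sep 𝒜 {x, y} {z, w} (k + 1)) (h2 : Sep 𝒜 {x, z} {y, w} (k + 1)) : False := by
  obtain ⟨A, hA, hAs⟩ := h1
  obtain ⟨B, hB, hBs⟩ := h2
  obtain ⟨x₀, hxA, hxB⟩ := exists_common
    (minus_uniform H.disj hA fun l hl => (hAs l hl).1 x (by simp))
    (minus_uniform H.disj hB fun l hl => (hBs l hl).1 x (by simp))
  obtain ⟨y₀, hyA, hyB⟩ := exists_common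
    (minus_uniform H.disj hA fun l hl => (hAs l hl).1 y (by simp))
    (plus_uniform H.disj hB fun l hl => (hBs l hl).2 y (by simp))
  obtain ⟨z₀, hzA, hzB⟩ := exists_common
    (plus_uniform H.disj hA fun l hl => (hAs l hl).2 z (by simp))
    (minus_uniform H.disj hB fun l hl => (hBs l hl).1 z (by simp))
  obtain ⟨w₀, hwA, hwB⟩ := exists_common
    (plus_uniform H.disj hA fun l hl => (hAs l hl).2 w (by simp))
    (plus_uniform H.disj hB fun l hl => (hBs l hl).2 w (by simp))
  exact H.cross _ _ _ _ A B hA hB (fun l hl => ⟨hxA l hl, hyA l hl, hzA l hl, hwA l hl⟩)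
    fun l hl => ⟨hxB l hl, hzB l hl, hyB l hl, hwB l hl⟩

/-! ### The crossratio of sets of triples -/

theorem le_tcr_iff (H : Hyp 𝒜 k) {K L : Set (Theta3 M)} (hK : K.Nonempty) (hL : L.Nonempty)
    (n : ℕ) : n ≤ tcr 𝒜 K L ↔ Sep 𝒜 K L n := by
  obtain ⟨x, hx⟩ := hK
  obtain ⟨y, hy⟩ := hL
  have hb : BddAbove {n | Sep 𝒜 K L n} := (H.bdd x y).mono fun m hm =>
    Sep.mono hm (Set.singleton_subset_iff.2 hx) (Set.singleton_subset_iff.2 hy) le_rfl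
  constructor
  · intro h
    exact (Nat.sSup_mem (s := {n | Sep 𝒜 K L n}) ⟨0, Sep.zero K L⟩ hb).mono le_rfl le_rfl h
  · exact fun h => le_csSup hb h

theorem tcr_sep (H : Hyp 𝒜 k) {K L : Set (Theta3 M)} (hK : K.Nonempty) (hL : L.Nonempty) :
    Sep 𝒜 K L (tcr 𝒜 K L) := (le_tcr_iff H hK hL _).1 le_rfl

theorem tcr_symm (H : Hyp 𝒜 k) (K L : Set (Theta3 M)) : tcr 𝒜 K L = tcr 𝒜 L K := by
  unfold tcr
  congr 1
  ext n
  exact ⟨Sep.symm H, Sep.symm H⟩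

theorem tcr_mono (H : Hyp 𝒜 k) {K L K' L' : Set (Theta3 M)} (hK : K.Nonempty) (hL : L.Nonempty)
    (hKK : K ⊆ K') (hLL : L ⊆ L') : tcr 𝒜 K' L' ≤ tcr 𝒜 K L :=
  (le_tcr_iff H hK hL _).2 ((tcr_sep H (hK.mono hKK) (hL.mono hLL)).mono hKK hLL le_rfl)

theorem tcr_split (H : Hyp 𝒜 k) {K L : Set (Theta3 M)} (hK : K.Nonempty) (hL : L.Nonempty)
    (u : Theta3 M) : tcr 𝒜 K L ≤ tcr 𝒜 (insert u K) L + tcr 𝒜 K (insert u L) + 1 := by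
  obtain ⟨p, q, h, hp, hq⟩ := (tcr_sep H hK hL).split u
  have h1 := (le_tcr_iff H hK (Set.insert_nonempty _ _) p).2 hp
  have h2 := (le_tcr_iff H (Set.insert_nonempty _ _) hL q).2 hq
  omega

theorem tcr_concat (H : Hyp 𝒜 k) {K L : Set (Theta3 M)} (hK : K.Nonempty) (hL : L.Nonempty)
    (u : Theta3 M) :
    tcr 𝒜 K (insert u L) + tcr 𝒜 (insert u K) L ≤ tcr 𝒜 K L + 2 * (k + 1) := by
  have := (le_tcr_iff H hK hL _).2 (Sep.concat H hK hL
    (tcr_sep H hK (Set.insert_nonempty u L)) (tcr_sep H (Set.insert_nonempty u K) hL))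
  omega

theorem tcr_cross (H : Hyp 𝒜 k) (x y z w : Theta3 M) :
    tcr 𝒜 {x, y} {z, w} ≤ k ∨ tcr 𝒜 {x, z} {y, w} ≤ k := by
  by_contra! hc
  exact Sep.cross H ((le_tcr_iff H (by simp) (by simp) (k + 1)).1 hc.1)
    ((le_tcr_iff H (by simp) (by simp) (k + 1)).1 hc.2)

theorem tcr_self (H : Hyp 𝒜 k) (x : Theta3 M) : tcr 𝒜 {x} {x} = 0 := by
  by_contra hc
  obtain ⟨A, hA, hs⟩ := (le_tcr_iff H (by simp) (by simp) 1).1 (Nat.one_le_iff_ne_zero.2 hc)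
  exact majority_disjoint (H.disj _ (hA.1 0 one_pos))
    ((hs 0 one_pos).1 x rfl) ((hs 0 one_pos).2 x rfl)

theorem tcr_triangle (H : Hyp 𝒜 k) (x y z : Theta3 M) :
    tcr 𝒜 {x} {y} ≤ tcr 𝒜 {x} {z} + tcr 𝒜 {z} {y} + 1 := by
  have h := tcr_split H (Set.singleton_nonempty x) (Set.singleton_nonempty y) z
  have h1 : tcr 𝒜 (insert z {x}) {y} ≤ tcr 𝒜 {z} {y} :=
    tcr_mono H (by simp) (by simp) (by simp) le_rfl
  have h2 : tcr 𝒜 {x} (insert z {y}) ≤ tcr 𝒜 {x} {z} :=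
    tcr_mono H (by simp) (by simp) le_rfl (by simp)
  omega

/-! ### The four-point condition -/

/-- Upper bound for `ρ(x, y)` by the crossratios of all partitions of `{x, y, z, w}` which
separate `x` from `y`. -/
theorem tcr_upper (H : Hyp 𝒜 k) (x y z w : Theta3 M) :
    tcr 𝒜 {x} {y} ≤ tcr 𝒜 {x} {y, z, w} + tcr 𝒜 {x, z} {y, w} + tcr 𝒜 {x, w} {y, z} +
      tcr 𝒜 {y} {x, z, w} + 3 := by
  have h := tcr_split H (Set.singleton_nonempty x) (Set.singleton_nonempty y) z
  have h1 := tcr_split H (Set.insert_nonempty z {x}) (Set.singleton_nonempty y) w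
  have h2 := tcr_split H (Set.singleton_nonempty x) (Set.insert_nonempty z {y}) w
  have e1 : (insert w (insert z {x}) : Set (Theta3 M)) = {x, z, w} := by ext; simp; tauto
  have e2 : (insert w (insert z {y}) : Set (Theta3 M)) = {y, z, w} := by ext; simp; tauto
  rw [e1, tcr_symm H {x, z, w} {y}, Set.pair_comm z x, Set.pair_comm w y] at h1
  rw [e2, Set.pair_comm z y, Set.pair_comm w x] at h2
  rw [Set.pair_comm z x, Set.pair_comm z y] at h
  omega

/-- Lower bound for `ρ(x, z)` by concatenating, at `y` and at `w`, the three chains crossed on the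
way from `x` to `z` in a tree with `x, y` on one side and `z, w` on the other. -/
theorem tcr_lower (H : Hyp 𝒜 k) (x y z w : Theta3 M) :
    tcr 𝒜 {x} {y, z, w} + tcr 𝒜 {x, y} {z, w} + tcr 𝒜 {z} {x, y, w} ≤
      tcr 𝒜 {x} {z} + 4 * (k + 1) := by
  have h1 := tcr_concat H (Set.singleton_nonempty x) (Set.insert_nonempty z {w}) y
  have h2 := tcr_concat H (Set.singleton_nonempty x) (Set.singleton_nonempty z) w
  have h3 : tcr 𝒜 {x, y, w} {z} ≤ tcr 𝒜 (insert w {x}) {z} :=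
    tcr_mono H (by simp) (by simp) (by intro; simp; tauto) le_rfl
  rw [tcr_symm H _ {z}] at h3
  rw [Set.pair_comm y x] at h1
  rw [Set.pair_comm w z] at h2
  omega

/-- The four-point condition, and the near equality of the two larger sums, for four triples
whose only large crossratio of two pairs is `(x, y | z, w)`. -/
theorem four_core (H : Hyp 𝒜 k) (x y z w : Theta3 M)
    (h1 : tcr 𝒜 {x, z} {y, w} ≤ k) (h2 : tcr 𝒜 {x, w} {y, z} ≤ k) :
    tcr 𝒜 {x} {y} + tcr 𝒜 {z} {w} ≤ tcr 𝒜 {x} {z} + tcr 𝒜 {y} {w} + 20 * (k + 1) ∧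
    tcr 𝒜 {x} {y} + tcr 𝒜 {z} {w} ≤ tcr 𝒜 {x} {w} + tcr 𝒜 {y} {z} + 20 * (k + 1) ∧
    tcr 𝒜 {x} {z} + tcr 𝒜 {y} {w} ≤ tcr 𝒜 {x} {w} + tcr 𝒜 {y} {z} + 20 * (k + 1) ∧
    tcr 𝒜 {x} {w} + tcr 𝒜 {y} {z} ≤ tcr 𝒜 {x} {z} + tcr 𝒜 {y} {w} + 20 * (k + 1) := by
  have perm₁ : ∀ a b c : Theta3 M, ({a, b, c} : Set (Theta3 M)) = {b, a, c} := fun a b c =>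
    Set.insert_comm a b {c}
  have perm₂ : ∀ a b c : Theta3 M, ({a, b, c} : Set (Theta3 M)) = {a, c, b} := fun a b c => by
    rw [Set.pair_comm b c]
  -- the summands occurring below, in a normal form
  have ex₁ : tcr 𝒜 {x} {z, y, w} = tcr 𝒜 {x} {y, z, w} := by rw [perm₁ z y w]
  have ex₂ : tcr 𝒜 {x} {y, w, z} = tcr 𝒜 {x} {y, z, w} := by rw [perm₂ y w z]
  have ex₃ : tcr 𝒜 {x} {w, y, z} = tcr 𝒜 {x} {y, z, w} := by rw [perm₁ w y z, perm₂ y w z]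
  have ey₁ : tcr 𝒜 {y} {z, x, w} = tcr 𝒜 {y} {x, z, w} := by rw [perm₁ z x w]
  have ey₂ : tcr 𝒜 {y} {x, w, z} = tcr 𝒜 {y} {x, z, w} := by rw [perm₂ x w z]
  have ey₃ : tcr 𝒜 {y} {w, x, z} = tcr 𝒜 {y} {x, z, w} := by rw [perm₁ w x z, perm₂ x w z]
  have ez₁ : tcr 𝒜 {z} {y, x, w} = tcr 𝒜 {z} {x, y, w} := by rw [perm₁ y x w]
  have ez₂ : tcr 𝒜 {z} {w, x, y} = tcr 𝒜 {z} {x, y, w} := by rw [perm₁ w x y, perm₂ x w y]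
  have ew₁ : tcr 𝒜 {w} {y, x, z} = tcr 𝒜 {w} {x, y, z} := by rw [perm₁ y x z]
  have ew₂ : tcr 𝒜 {w} {z, x, y} = tcr 𝒜 {w} {x, y, z} := by rw [perm₁ z x y, perm₂ x z y]
  have m₁ : tcr 𝒜 {x, y} {w, z} = tcr 𝒜 {x, y} {z, w} := by rw [Set.pair_comm w z]
  have m₂ : tcr 𝒜 {y, x} {z, w} = tcr 𝒜 {x, y} {z, w} := by rw [Set.pair_comm y x]
  have m₃ : tcr 𝒜 {y, x} {w, z} = tcr 𝒜 {x, y} {z, w} := by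
    rw [Set.pair_comm y x, Set.pair_comm w z]
  have b₁ : tcr 𝒜 {x, w} {z, y} = tcr 𝒜 {x, w} {y, z} := by rw [Set.pair_comm z y]
  have b₂ : tcr 𝒜 {y, z} {w, x} = tcr 𝒜 {x, w} {y, z} := by
    rw [tcr_symm H, Set.pair_comm w x]
  have b₃ : tcr 𝒜 {z, y} {w, x} = tcr 𝒜 {x, w} {y, z} := by
    rw [tcr_symm H, Set.pair_comm w x, Set.pair_comm z y]
  have c₁ : tcr 𝒜 {x, z} {w, y} = tcr 𝒜 {x, z} {y, w} := by rw [Set.pair_comm w y]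
  have c₂ : tcr 𝒜 {y, w} {z, x} = tcr 𝒜 {x, z} {y, w} := by
    rw [tcr_symm H, Set.pair_comm z x]
  have c₃ : tcr 𝒜 {z, x} {w, y} = tcr 𝒜 {x, z} {y, w} := by
    rw [Set.pair_comm z x, Set.pair_comm w y]
  have uxy := tcr_upper H x y z w
  have uzw := tcr_upper H z w x y
  have uxz := tcr_upper H x z y w
  have uyw := tcr_upper H y w x z
  have uxw := tcr_upper H x w y z
  have uyz := tcr_upper H y z x w
  have lxz := tcr_lower H x y z w
  have lyw := tcr_lower H y x w z
  have lxw := tcr_lower H x y w z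
  have lyz := tcr_lower H y x z w
  refine ⟨?_, ?_, ?_, ?_⟩ <;> omega

theorem tcr_four_point (H : Hyp 𝒜 k) (x y z w : Theta3 M) :
    tcr 𝒜 {x} {y} + tcr 𝒜 {z} {w} ≤
      max (tcr 𝒜 {x} {z} + tcr 𝒜 {y} {w}) (tcr 𝒜 {x} {w} + tcr 𝒜 {y} {z}) + 20 * (k + 1) := by
  -- at most one of the three crossratios of pairs exceeds `k`
  have c₁ := tcr_cross H x y z w
  have c₂ := tcr_cross H x y w z
  have c₃ := tcr_cross H x z w y
  have e₁ : tcr 𝒜 {x, y} {w, z} = tcr 𝒜 {x, y} {z, w} := by rw [Set.pair_comm w z]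
  have e₂ : tcr 𝒜 {x, z} {w, y} = tcr 𝒜 {x, z} {y, w} := by rw [Set.pair_comm w y]
  have e₃ : tcr 𝒜 {x, w} {z, y} = tcr 𝒜 {x, w} {y, z} := by rw [Set.pair_comm z y]
  have s₁ := tcr_symm H {w} {z}
  have s₂ := tcr_symm H {w} {y}
  have s₃ := tcr_symm H {z} {y}
  have t₁ := four_core H x y z w
  have t₂ := four_core H x z y w
  have t₃ := four_core H x w y z
  have hxy : (tcr 𝒜 {x, z} {y, w} ≤ k ∧ tcr 𝒜 {x, w} {y, z} ≤ k) ∨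
      (tcr 𝒜 {x, y} {z, w} ≤ k ∧ tcr 𝒜 {x, w} {y, z} ≤ k) ∨
      (tcr 𝒜 {x, y} {z, w} ≤ k ∧ tcr 𝒜 {x, z} {y, w} ≤ k) := by omega
  rcases hxy with ⟨h, h'⟩ | ⟨h, h'⟩ | ⟨h, h'⟩
  · have := t₁ h h'
    omega
  · have := t₂ h (e₃ ▸ h')
    omega
  · have := t₃ (e₁ ▸ h) (e₂ ▸ h')
    omega

/-! ### Points between two triples -/

/-- The triple `c = (x₁, u, y₁)`, where `u` lies in the gap of the annulus `A i` of a maximal chain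
`A` from `x` to `y`, and `x₁`, `y₁` are points of `x`, `y` on the two sides of `A`, divides that
chain. Moreover no long chain separates `{x, y}` from `c`: two of the three points of `c` would lie
on its plus side, and each choice of the two contradicts (A2), applied with a part of `A`. The
bounds on `i` ensure that there are `k + 1` annuli of `A` on either side of `A i`. -/
theorem exists_mid (H : Hyp 𝒜 k) (x y : Theta3 M) (i : ℕ) (hi : k + 1 ≤ i)
    (hi' : i + k + 2 ≤ tcr 𝒜 {x} {y}) :
    ∃ c : Theta3 M, i ≤ tcr 𝒜 {x} {c, y} ∧ tcr 𝒜 {x} {y} ≤ tcr 𝒜 {c, x} {y} + i + 1 ∧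
      tcr 𝒜 {c} {x, y} ≤ k := by
  set n := tcr 𝒜 {x} {y} with hn
  obtain ⟨A, hA, hs⟩ := tcr_sep H (Set.singleton_nonempty x) (Set.singleton_nonempty y)
  rw [← hn] at hA hs
  obtain ⟨x₁, x₂, hx, hx₁, hx₂⟩ := minus_uniform H.disj hA fun l hl => (hs l hl).1 x rfl
  obtain ⟨y₁, y₂, hy, hy₁, hy₂⟩ := plus_uniform H.disj hA fun l hl => (hs l hl).2 y rfl
  obtain ⟨u, hu, hu'⟩ := H.gap (A i) (hA.1 i (by omega))
  have hup : ∀ l < i, u ∈ interior (A l).2 := fun l hl =>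
    (ann_cases (hA.2 l i hl (by omega)) u).resolve_right fun h => hu (interior_subset h)
  have hum : ∀ l, i < l → l < n → u ∈ interior (A l).1 := fun l hl hl' =>
    (ann_cases (hA.2 i l hl hl') u).resolve_left fun h => hu' (interior_subset h)
  have hin : i < n := by omega
  have d₁ : t3c x x₁ ≠ u := fun h => hu (h ▸ interior_subset (hx₁ i hin))
  have d₂ : u ≠ t3c y y₁ := fun h => hu' (h ▸ interior_subset (hy₁ i hin))
  have d₃ : t3c x x₁ ≠ t3c y y₁ := fun h =>
    not_mem_plus (H.disj _ (hA.1 i hin)) (hx₁ i hin) (h ▸ hy₁ i hin)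
  let c : Theta3 M := ⟨(t3c x x₁, u, t3c y y₁), d₁, d₂, d₃⟩
  refine ⟨c, ?_, ?_, ?_⟩
  · refine (le_tcr_iff H (by simp) (by simp) i).2
      ⟨A, by simpa using hA.sub (p := 0) (m := i) (by omega), fun l hl =>
        ⟨(hs l (by omega)).1, ?_⟩⟩
    rintro _ (rfl | rfl)
    · exact ⟨1, 2, by decide, hup l hl, hy₁ l (by omega)⟩
    · exact (hs l (by omega)).2 _ rfl
  · have : n - (i + 1) ≤ tcr 𝒜 {c, x} {y} := by
      refine (le_tcr_iff H (by simp) (by simp) _).2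
        ⟨fun l => A (i + 1 + l), hA.sub (by omega), fun l hl => ⟨?_, (hs _ (by omega)).2⟩⟩
      rintro _ (rfl | rfl)
      · exact ⟨0, 1, by decide, hx₁ _ (by omega), hum _ (by omega) (by omega)⟩
      · exact (hs _ (by omega)).1 _ rfl
    omega
  · by_contra! hc
    rw [tcr_symm H] at hc
    obtain ⟨B, hB, hBs⟩ := (le_tcr_iff H (by simp) (by simp) (k + 1)).1 hc
    have hxB := minus_uniform H.disj hB fun l hl => (hBs l hl).1 x (by simp)
    have hyB := minus_uniform H.disj hB fun l hl => (hBs l hl).1 y (by simp)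
    obtain ⟨p, q, hpq, hp, hq⟩ := plus_uniform H.disj hB fun l hl => (hBs l hl).2 c (by simp)
    -- each of `x`, `y` has one of its two chosen points on the minus side of `B`
    obtain ⟨x', hx'A, hx'B⟩ := exists_common
      (I := fun p => ∀ l < n, t3c x p ∈ interior (A l).1) ⟨x₁, x₂, hx, hx₁, hx₂⟩ hxB
    obtain ⟨y', hy'A, hy'B⟩ := exists_common
      (I := fun p => ∀ l < n, t3c y p ∈ interior (A l).2) ⟨y₁, y₂, hy, hy₁, hy₂⟩ hyB
    have hA₀ := hA.sub (p := 0) (m := k + 1) (by omega)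
    have hA₁ := hA.sub (p := i + 1) (m := k + 1) (by omega)
    -- no two points of `c` lie together on the plus side of `B`
    have h01 : (∀ l < k + 1, t3c x x₁ ∈ interior (B l).2) → (∀ l < k + 1, u ∈ interior (B l).2) →
        False := fun hX hU => by
      refine H.cross (t3c x x') (t3c x x₁) (t3c y y') u _ _ hA₀ hB
        (fun l hl => ⟨hx'A _ (by omega), hx₁ _ (by omega), hy'A _ (by omega), hup _ (by omega)⟩)
        (fun l hl => ⟨hx'B l hl, hy'B l hl, hX l hl, hU l hl⟩)
    have h02 : (∀ l < k + 1, t3c x x₁ ∈ interior (B l).2) →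
        (∀ l < k + 1, t3c y y₁ ∈ interior (B l).2) → False := fun hX hY => by
      refine H.cross (t3c x x') (t3c x x₁) (t3c y y') (t3c y y₁) _ _ hA₀ hB
        (fun l hl => ⟨hx'A _ (by omega), hx₁ _ (by omega), hy'A _ (by omega), hy₁ _ (by omega)⟩)
        (fun l hl => ⟨hx'B l hl, hy'B l hl, hX l hl, hY l hl⟩)
    have h12 : (∀ l < k + 1, u ∈ interior (B l).2) →
        (∀ l < k + 1, t3c y y₁ ∈ interior (B l).2) → False := fun hU hY => by
      refine H.cross (t3c x x') u (t3c y y') (t3c y y₁) _ _ hA₁ hB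
        (fun l hl => ⟨hx'A _ (by omega), hum _ (by omega) (by omega), hy'A _ (by omega),
          hy₁ _ (by omega)⟩)
        (fun l hl => ⟨hx'B l hl, hy'B l hl, hU l hl, hY l hl⟩)
    fin_cases p <;> fin_cases q
    · exact hpq rfl
    · exact h01 hp hq
    · exact h02 hp hq
    · exact h01 hq hp
    · exact hpq rfl
    · exact h12 hp hq
    · exact h02 hq hp
    · exact h12 hq hp
    · exact hpq rfl

/-- Every distance between `0` and `ρ(x, y) + 1` from `x` is realized, up to a bounded error, by a
triple `c` almost between `x` and `y`. -/
theorem exists_between (H : Hyp 𝒜 k) (x y : Theta3 M) (i : ℕ) (hi : i ≤ tcr 𝒜 {x} {y} + 1) :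
    ∃ c : Theta3 M, tcr 𝒜 {x} {c} ≤ i + (3 * k + 6) ∧ i ≤ tcr 𝒜 {x} {c} + (3 * k + 6) ∧
      tcr 𝒜 {c} {y} + i ≤ tcr 𝒜 {x} {y} + 1 + (3 * k + 6) ∧
      tcr 𝒜 {x} {y} + 1 ≤ tcr 𝒜 {c} {y} + i + (3 * k + 6) := by
  by_cases h1 : i ≤ k
  · exact ⟨x, by rw [tcr_self H]; omega, by omega, by omega, by omega⟩
  by_cases h2 : i + k + 2 ≤ tcr 𝒜 {x} {y}
  · obtain ⟨c, hc₁, hc₂, hc₃⟩ := exists_mid H x y i (by omega) h2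
    refine ⟨c, ?_⟩
    have hcat := tcr_concat H (Set.singleton_nonempty x) (Set.singleton_nonempty y) c
    have s₁ := tcr_split H (Set.singleton_nonempty x) (Set.singleton_nonempty c) y
    have s₂ := tcr_split H (Set.singleton_nonempty c) (Set.singleton_nonempty y) x
    have m₁ : tcr 𝒜 {x} {c, y} ≤ tcr 𝒜 {x} {c} := tcr_mono H (by simp) (by simp) le_rfl (by simp)
    have m₂ : tcr 𝒜 {c, x} {y} ≤ tcr 𝒜 {c} {y} := tcr_mono H (by simp) (by simp) (by simp) le_rfl
    rw [Set.pair_comm y c, Set.pair_comm y x, tcr_symm H {x, y} {c}] at s₁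
    rw [Set.pair_comm x c] at s₂
    omega
  · exact ⟨y, by omega, by omega, by rw [tcr_self H]; omega, by rw [tcr_self H]; omega⟩

/-! ### From crossratios of triples to `ρ` -/

theorem Hyp.of_annulusSystem (hann : ∀ A ∈ 𝒜, IsAnnulus A) (hsym : ∀ A ∈ 𝒜, (A.2, A.1) ∈ 𝒜)
    (hA1 : ∀ x y z w : M, x ≠ y → z ≠ w → crossratio 𝒜 {x, y} {z, w} ≠ ⊤)
    (hA2 : ∀ x y z w : M,
      ¬((k : ℕ∞) < crossratio 𝒜 {x, y} {z, w} ∧ (k : ℕ∞) < crossratio 𝒜 {x, z} {y, w})) :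
    Hyp 𝒜 k ∧ ∀ a b : Theta3 M, theta3rho 𝒜 a b ≠ ⊤ := by
  have hd : ∀ A ∈ 𝒜, A.1 ∩ A.2 = ∅ := fun A hA => (hann A hA).2.2.1
  have hfin : ∀ a b : Theta3 M, theta3rho 𝒜 a b ≠ ⊤ := by
    intro a b htop
    have hS : {n : ℕ∞ | ∃ i j k l : Fin 3, i ≠ j ∧ k ≠ l ∧
        n = crossratio 𝒜 {t3c a i, t3c a j} {t3c b k, t3c b l}}.Finite := by
      refine (Set.finite_range fun p : Fin 3 × Fin 3 × Fin 3 × Fin 3 =>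
        crossratio 𝒜 {t3c a p.1, t3c a p.2.1} {t3c b p.2.2.1, t3c b p.2.2.2}).subset ?_
      rintro _ ⟨i, j, k, l, -, -, rfl⟩
      exact ⟨(i, j, k, l), rfl⟩
    have hne : {n : ℕ∞ | ∃ i j k l : Fin 3, i ≠ j ∧ k ≠ l ∧
        n = crossratio 𝒜 {t3c a i, t3c a j} {t3c b k, t3c b l}}.Nonempty :=
      ⟨_, 0, 1, 0, 1, by decide, by decide, rfl⟩
    obtain ⟨i, j, k, l, hij, hkl, h⟩ := hne.csSup_mem hS
    refine hA1 _ _ _ _ ((t3c_injective a).ne hij) ((t3c_injective b).ne hkl) (h ▸ htop)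
  refine ⟨⟨hd, fun A hA => ?_, hsym, fun x y => ?_, fun x y z w A B hA hB hAs hBs => ?_⟩, hfin⟩
  · obtain ⟨u, hu⟩ := (Set.ne_univ_iff_exists_notMem _).1 (hann A hA).2.2.2
    exact ⟨u, fun h => hu (Or.inl h), fun h => hu (Or.inr h)⟩
  · refine ⟨(theta3rho 𝒜 x y).toNat, fun n hn => ?_⟩
    have := (le_rho_iff hd x y n).2 hn
    rw [← ENat.natCast_toNat (hfin x y)] at this
    exact_mod_cast this
  · refine hA2 x y z w ⟨lt_of_lt_of_le ?_ ((le_crossratio_iff hd _ _ (k + 1)).2 ⟨A, hA, ?_⟩),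
      lt_of_lt_of_le ?_ ((le_crossratio_iff hd _ _ (k + 1)).2 ⟨B, hB, ?_⟩)⟩
    · exact_mod_cast Nat.lt_succ_self k
    · intro i hi
      obtain ⟨h1, h2, h3, h4⟩ := hAs i hi
      simp [Set.insert_subset_iff, *]
    · exact_mod_cast Nat.lt_succ_self k
    · intro i hi
      obtain ⟨h1, h2, h3, h4⟩ := hBs i hi
      simp [Set.insert_subset_iff, *]

theorem rho_eq (H : Hyp 𝒜 k) (hfin : ∀ a b : Theta3 M, theta3rho 𝒜 a b ≠ ⊤) (a b : Theta3 M) :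
    (theta3rho 𝒜 a b).toNat = tcr 𝒜 {a} {b} := by
  refine eq_of_forall_le_iff fun n => ?_
  rw [le_tcr_iff H (by simp) (by simp), ← le_rho_iff H.disj]
  conv_rhs => rw [← ENat.natCast_toNat (hfin a b)]
  exact_mod_cast Iff.rfl

theorem Sep.image {G : Type*} [Group G] {act : G → M → M} (hact : IsActionByHomeos act)
    (hinv : ∀ (g : G), ∀ A ∈ 𝒜, (act g '' A.1, act g '' A.2) ∈ 𝒜) (g : G) {a b : Theta3 M} {n : ℕ}
    (h : Sep 𝒜 {a} {b} n) : Sep 𝒜 {theta3Map hact.1 g a} {theta3Map hact.1 g b} n := by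
  let φ : M ≃ₜ M :=
    { toFun := act g
      invFun := act g⁻¹
      left_inv := fun x => by rw [← hact.1.2, inv_mul_cancel, hact.1.1]
      right_inv := fun x => by rw [← hact.1.2, mul_inv_cancel, hact.1.1]
      continuous_toFun := hact.2 g
      continuous_invFun := hact.2 g⁻¹ }
  have hinter : ∀ S : Set M, interior (act g '' S) = act g '' interior S := fun S =>
    (φ.image_interior S).symm
  have ht : ∀ (x : Theta3 M) (i : Fin 3), t3c (theta3Map hact.1 g x) i = act g (t3c x i) := by
    intro x i
    fin_cases i <;> rfl
  have hmaj : ∀ (x : Theta3 M) (S : Set M), Majority x S →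
      Majority (theta3Map hact.1 g x) (act g '' S) := by
    rintro x S ⟨i, j, hij, hi, hj⟩
    refine ⟨i, j, hij, ?_, ?_⟩
    · rw [hinter, ht]
      exact Set.mem_image_of_mem _ hi
    · rw [hinter, ht]
      exact Set.mem_image_of_mem _ hj
  obtain ⟨A, hA, hs⟩ := h
  refine ⟨fun i => (act g '' (A i).1, act g '' (A i).2),
    ⟨fun i hi => hinv g _ (hA.1 i hi), fun i j hij hj => ?_⟩, fun i hi => ⟨?_, ?_⟩⟩
  · have := hA.2 i j hij hj
    simp only [annLtAnn] at this ⊢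
    rw [hinter, hinter, ← Set.image_union, this, Set.image_univ]
    exact φ.surjective.range_eq
  · rintro _ rfl
    exact hmaj _ _ ((hs i hi).1 a rfl)
  · rintro _ rfl
    exact hmaj _ _ ((hs i hi).2 b rfl)

/-- A quasimetric satisfying the four-point condition, in which each pair of points has points
almost between them at all distances, is a path quasimetric: the four-point condition bounds the
distance between two such intermediate points. -/
theorem exists_path {Q : Type*} {ρ : Q → Q → ℝ} {r h C : ℝ} (hC : 0 ≤ C) (hh : 0 ≤ h)
    (hq : IsQuasimetric r ρ) (hr : 0 ≤ r)
    (h4 : ∀ x y z w : Q, ρ x y + ρ z w ≤ max (ρ x z + ρ y w) (ρ x w + ρ y z) + h)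
    (hm : ∀ x y : Q, ∃ n : ℕ, 0 < n ∧ |ρ x y - n| ≤ C ∧ ∀ i ≤ n, ∃ c : Q,
      |ρ x c - i| ≤ C ∧ |ρ c y - (n - i)| ≤ C) :
    IsPathQuasimetric ρ := by
  refine ⟨⟨r, hr, hq⟩, 3 * C + h + r, by positivity, fun x y => ?_⟩
  obtain ⟨hpos, hself, hsymm, htri⟩ := hq
  obtain ⟨n, hn, hxy, hc⟩ := hm x y
  have hc' : ∀ i, ∃ c : Q, (i = 0 → c = x) ∧ (i = n → c = y) ∧
      (i ≤ n → |ρ x c - i| ≤ C ∧ |ρ c y - (n - i)| ≤ C) := by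
    intro i
    by_cases h0 : i = 0
    · subst h0
      exact ⟨x, fun _ => rfl, fun h => absurd h hn.ne, fun _ => by simpa [hself] using ⟨hC, hxy⟩⟩
    by_cases h1 : i = n
    · subst h1
      exact ⟨y, fun h => absurd h h0, fun _ => rfl, fun _ => by simpa [hself] using ⟨hxy, hC⟩⟩
    by_cases hi : i ≤ n
    · obtain ⟨c, h⟩ := hc i hi
      exact ⟨c, fun h => absurd h h0, fun h => absurd h h1, fun _ => h⟩
    · exact ⟨x, fun _ => rfl, fun h => absurd h h1, fun h => absurd h hi⟩
  choose c hc0 hcn hcd using hc'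
  refine ⟨n, c, hc0 0 rfl, hcn n rfl, ?_⟩
  -- by symmetry it suffices to treat `i ≤ j`
  have main : ∀ i j, i ≤ j → j ≤ n → |ρ (c i) (c j) - ((j : ℝ) - i)| ≤ 3 * C + h + r := by
    intro i j hij hj
    obtain ⟨hi₁, hi₂⟩ := hcd i (hij.trans hj)
    obtain ⟨hj₁, hj₂⟩ := hcd j hj
    have hij' : (i : ℝ) ≤ j := by exact_mod_cast hij
    have ht := htri x (c j) (c i)
    have hf := h4 x y (c i) (c j)
    rw [hsymm y (c j), hsymm y (c i)] at hf
    rw [abs_le] at *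
    constructor
    · linarith
    · rcases max_cases (ρ x (c i) + ρ (c j) y) (ρ x (c j) + ρ (c i) y) with h | h <;>
        rw [h.1] at hf <;> linarith
  intro i hi j hj
  rcases le_total i j with hij | hij
  · have := abs_le.1 (main i j hij hj)
    rw [abs_sub_comm, abs_of_nonneg (sub_nonneg.2 (Nat.cast_le.2 hij))]
    exact this
  · have := abs_le.1 (main j i hij hi)
    rw [abs_of_nonneg (sub_nonneg.2 (Nat.cast_le.2 hij)), hsymm]
    exact this

end AnnulusSystem

/-- If `𝒜` is a symmetric `G`-invariant annulus system on `M`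
satisfying axioms (A1) and (A2), then the associated function `ρ` on the space of
distinct triples takes only finite values and is a hyperbolic `G`-invariant path
quasimetric. -/
theorem statement9 {G M : Type*} [Group G] [TopologicalSpace M]
    {act : G → M → M} (hact : IsActionByHomeos act)
    (𝒜 : Set (Set M × Set M)) (hann : ∀ A ∈ 𝒜, IsAnnulus A)
    (hsym : ∀ A ∈ 𝒜, (A.2, A.1) ∈ 𝒜)
    (hinv : ∀ (g : G), ∀ A ∈ 𝒜, (act g '' A.1, act g '' A.2) ∈ 𝒜)
    (hA1 : ∀ x y z w : M, x ≠ y → z ≠ w → crossratio 𝒜 {x, y} {z, w} ≠ ⊤)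
    (hA2 : ∃ k : ℕ, ∀ x y z w : M,
      ¬((k : ℕ∞) < crossratio 𝒜 {x, y} {z, w} ∧ (k : ℕ∞) < crossratio 𝒜 {x, z} {y, w})) :
    (∀ a b : Theta3 M, theta3rho 𝒜 a b ≠ ⊤) ∧
    IsPathQuasimetric (fun a b : Theta3 M => ((theta3rho 𝒜 a b).toNat : ℝ)) ∧
    IsHyperbolicQM (fun a b : Theta3 M => ((theta3rho 𝒜 a b).toNat : ℝ)) ∧
    ∀ (g : G) (a b : Theta3 M),
      theta3rho 𝒜 (theta3Map hact.1 g a) (theta3Map hact.1 g b) = theta3rho 𝒜 a b := by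
  obtain ⟨k, hA2⟩ := hA2
  obtain ⟨H, hfin⟩ := AnnulusSystem.Hyp.of_annulusSystem hann hsym hA1 hA2
  have heq := AnnulusSystem.rho_eq H hfin
  have h4 : ∀ x y z w : Theta3 M,
      ((theta3rho 𝒜 x y).toNat : ℝ) + ((theta3rho 𝒜 z w).toNat : ℝ) ≤
        max (((theta3rho 𝒜 x z).toNat : ℝ) + ((theta3rho 𝒜 y w).toNat : ℝ))
          (((theta3rho 𝒜 x w).toNat : ℝ) + ((theta3rho 𝒜 y z).toNat : ℝ)) +
          ((20 * (k + 1) : ℕ) : ℝ) := by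
    intro x y z w
    simp only [heq]
    exact_mod_cast AnnulusSystem.tcr_four_point H x y z w
  refine ⟨hfin, ?_, ⟨_, Nat.cast_nonneg _, h4⟩, fun g a b => ?_⟩
  · refine AnnulusSystem.exists_path (r := 1) (C := ((3 * k + 6 : ℕ) : ℝ)) (Nat.cast_nonneg _)
      (Nat.cast_nonneg _) ⟨fun x y => Nat.cast_nonneg _, fun x => ?_, fun x y => ?_,
        fun x y z => ?_⟩ zero_le_one h4 fun x y => ?_
    · simp only [heq, AnnulusSystem.tcr_self H, Nat.cast_zero]
    · simp only [heq]
      rw [AnnulusSystem.tcr_symm H]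
    · simp only [heq]
      exact_mod_cast AnnulusSystem.tcr_triangle H x y z
    · simp only [heq]
      -- one more than the distance, so that the path has at least two vertices
      refine ⟨AnnulusSystem.tcr 𝒜 {x} {y} + 1, Nat.succ_pos _, ?_, fun i hi => ?_⟩
      · rw [abs_le]
        push_cast
        have : (0 : ℝ) ≤ k := Nat.cast_nonneg k
        constructor <;> linarith
      · obtain ⟨c, h1, h2, h3, h5⟩ := AnnulusSystem.exists_between H x y i hi
        have h1' := (Nat.cast_le (α := ℝ)).2 h1
        have h2' := (Nat.cast_le (α := ℝ)).2 h2
        have h3' := (Nat.cast_le (α := ℝ)).2 h3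
        have h5' := (Nat.cast_le (α := ℝ)).2 h5
        push_cast at h1' h2' h3' h5'
        refine ⟨c, ?_, ?_⟩ <;> rw [abs_le] <;> push_cast <;> constructor <;> linarith
  · refine ENat.eq_of_forall_natCast_le_iff fun n => ?_
    rw [AnnulusSystem.le_rho_iff H.disj, AnnulusSystem.le_rho_iff H.disj]
    refine ⟨fun h => ?_, fun h => h.image hact hinv g⟩
    have hback : ∀ x : Theta3 M, theta3Map hact.1 g⁻¹ (theta3Map hact.1 g x) = x := by
      rintro ⟨⟨p, q, r⟩, hx⟩
      simp [theta3Map, ← hact.1.2, hact.1.1]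
    have := h.image hact hinv g⁻¹
    rwa [hback, hback] at this
end
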